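/- Let n ≥ 5 and let T₁, T₂ be two 2-triangulations of the n-gon related by a flip, i.e. T₁ ∖ T₂ = {e} and T₂ ∖ T₁ = {f} for single pairs e and f. Then there exist real numbers t₁ < … < tₙ such that, with p_i = (t_i, t_i², t_i³, t_i⁴), the rows of R(p₁,…,pₙ) indexed by T₁ are linearly independent, the rows indexed by T₂ are linearly independent, and the unique (up to scalar) linear dependence λ among the rows indexed by T₁ ∪ T₂ satisfies λ_e · λ_f > 0. -/

import Mathlib

open scoped BigOperators

/-- A pair `{i,j}` of distinct vertices of the `n`-gon.  Vertices `1,…,n` are represented by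
`Fin n` (vertex `i` corresponds to `i-1 : Fin n`), and a pair is recorded with its endpoints
in increasing order. -/
abbrev Pair (n : ℕ) := {p : Fin n × Fin n // p.1 < p.2}

/-- Two pairs `{i,j}` (`i<j`) and `{k,l}` (`k<l`) cross if `i<k<j<l` or `k<i<l<j`. -/
def Cross {n : ℕ} (e f : Pair n) : Prop :=
  (e.val.1 < f.val.1 ∧ f.val.1 < e.val.2 ∧ e.val.2 < f.val.2) ∨
  (f.val.1 < e.val.1 ∧ e.val.1 < f.val.2 ∧ f.val.2 < e.val.2)

/-- A set of pairs is `(k+1)`-crossing-free if it contains no `k+1` pairwise crossing pairs. -/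
def CrossingFree (n k : ℕ) (S : Set (Pair n)) : Prop :=
  ¬ ∃ C : Finset (Pair n), ↑C ⊆ S ∧ C.card = k + 1 ∧
      ∀ e ∈ C, ∀ f ∈ C, e ≠ f → Cross e f

/-- A `k`-triangulation of the `n`-gon: an inclusion-maximal `(k+1)`-crossing-free set. -/
def IsTriangulation (n k : ℕ) (T : Set (Pair n)) : Prop :=
  CrossingFree n k T ∧ ∀ S : Set (Pair n), CrossingFree n k S → T ⊆ S → S = T

/-- The length of a pair `{i,j}` with respect to the `N`-gon: `min (j-i) (N-(j-i))`. -/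
def pairLen (N : ℕ) {n : ℕ} (e : Pair n) : ℕ :=
  min ((e.val.2 : ℕ) - (e.val.1 : ℕ)) (N - ((e.val.2 : ℕ) - (e.val.1 : ℕ)))

/-- A pair is `k`-relevant in the `N`-gon if its length is at least `k+1`. -/
def Relevant (N k : ℕ) {n : ℕ} (e : Pair n) : Prop := k + 1 ≤ pairLen N e

/-- The 2×2 determinant `det (u v)` of two plane vectors. -/
def det2 (u v : ℝ × ℝ) : ℝ := u.1 * v.2 - u.2 * v.1

/-- Points in convex position, listed in counterclockwise order along their convex hull:
they are distinct and every triple `i<j<k` is positively oriented. -/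
def ConvexPosition {n : ℕ} (q : Fin n → ℝ × ℝ) : Prop :=
  Function.Injective q ∧
  ∀ i j k : Fin n, i < j → j < k → 0 < det2 (q j - q i) (q k - q i)

/-- `p` lies on the line through `a` and `b`. -/
def onLine (a b p : ℝ × ℝ) : Prop := det2 (b - a) (p - a) = 0

/-- Row of the bar-and-joint rigidity matrix `R(p)` indexed by the pair `e`:
`p_i - p_j` in block `i`, `p_j - p_i` in block `j`, zeros elsewhere. -/
def bjRow {n d : ℕ} (p : Fin n → Fin d → ℝ) (e : Pair n) : Fin n × Fin d → ℝ :=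
  fun ma =>
    if ma.1 = e.val.1 then p e.val.1 ma.2 - p e.val.2 ma.2
    else if ma.1 = e.val.2 then p e.val.2 ma.2 - p e.val.1 ma.2
    else 0

/-- Row of the hyperconnectivity matrix `H(p)` indexed by the pair `e`:
`p_j` in block `i`, `-p_i` in block `j`, zeros elsewhere. -/
def hypRow {n d : ℕ} (p : Fin n → Fin d → ℝ) (e : Pair n) : Fin n × Fin d → ℝ :=
  fun ma =>
    if ma.1 = e.val.1 then p e.val.2 ma.2
    else if ma.1 = e.val.2 then - p e.val.1 ma.2
    else 0

/-- The vector `c_{ij} = ((x_i-x_j)^{d-1}, (x_i-x_j)^{d-2}(y_i-y_j), …, (y_i-y_j)^{d-1})`. -/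
def cvec (d : ℕ) (qi qj : ℝ × ℝ) : Fin d → ℝ :=
  fun a => (qi.1 - qj.1) ^ (d - 1 - (a : ℕ)) * (qi.2 - qj.2) ^ (a : ℕ)

/-- Row of the cofactor rigidity matrix `C_d(q)` indexed by the pair `e`:
`c_{ij}` in block `i`, `-c_{ij}` in block `j`, zeros elsewhere. -/
def cofRow (d : ℕ) {n : ℕ} (q : Fin n → ℝ × ℝ) (e : Pair n) : Fin n × Fin d → ℝ :=
  fun ma =>
    if ma.1 = e.val.1 then cvec d (q e.val.1) (q e.val.2) ma.2
    else if ma.1 = e.val.2 then - cvec d (q e.val.1) (q e.val.2) ma.2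
    else 0

/-- `x_{ij} = X_i Z_j - Z_i X_j` for vectors in `ℝ³`. -/
def xQ (Qi Qj : ℝ × ℝ × ℝ) : ℝ := Qi.1 * Qj.2.2 - Qi.2.2 * Qj.1

/-- `y_{ij} = Y_i Z_j - Z_i Y_j` for vectors in `ℝ³`. -/
def yQ (Qi Qj : ℝ × ℝ × ℝ) : ℝ := Qi.2.1 * Qj.2.2 - Qi.2.2 * Qj.2.1

/-- The vector `c_{ij} = (x_{ij}^{d-1}, x_{ij}^{d-2} y_{ij}, …, y_{ij}^{d-1})`. -/
def gcvec (d : ℕ) (Qi Qj : ℝ × ℝ × ℝ) : Fin d → ℝ :=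
  fun a => (xQ Qi Qj) ^ (d - 1 - (a : ℕ)) * (yQ Qi Qj) ^ (a : ℕ)

/-- Row of the generalized cofactor rigidity matrix `C_d(Q)` for vectors in `ℝ³`. -/
def gcofRow (d : ℕ) {n : ℕ} (Q : Fin n → ℝ × ℝ × ℝ) (e : Pair n) : Fin n × Fin d → ℝ :=
  fun ma =>
    if ma.1 = e.val.1 then gcvec d (Q e.val.1) (Q e.val.2) ma.2
    else if ma.1 = e.val.2 then - gcvec d (Q e.val.1) (Q e.val.2) ma.2
    else 0

/-- The cone of all nonnegative linear combinations of `{v e : e ∈ S}`. -/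
def coneOf {n : ℕ} {V : Type*} [AddCommGroup V] [Module ℝ V]
    (v : Pair n → V) (S : Set (Pair n)) : Set V :=
  {x | ∃ c : Pair n → ℝ, (∀ e, 0 ≤ c e) ∧ (∀ e, c e ≠ 0 → e ∈ S) ∧ x = ∑ e, c e • v e}

/-- The vectors `(v e)` realize the `k`-associahedron of the `n`-gon as a complete
simplicial fan: (a) the vectors of every `k`-triangulation are linearly independent;
(b) cones of two `k`-triangulations intersect in the cone of their intersection;
(c) the union of all the cones is the linear span of all the vectors. -/
def RealizesFan (n k : ℕ) {V : Type*} [AddCommGroup V] [Module ℝ V]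
    (v : Pair n → V) : Prop :=
  (∀ T : Set (Pair n), IsTriangulation n k T →
      LinearIndependent ℝ (fun e : T => v e.val)) ∧
  (∀ T T' : Set (Pair n), IsTriangulation n k T → IsTriangulation n k T' →
      coneOf v T ∩ coneOf v T' = coneOf v (T ∩ T')) ∧
  (⋃ T ∈ {T : Set (Pair n) | IsTriangulation n k T}, coneOf v T) =
    (Submodule.span ℝ (Set.range v) : Set V)

/-!
Dividing by the differences `t j - t i` turns a dependence among rows on the moment curve into an
antisymmetric weight `w` with `∑ j, w i j • q j ^ 3 = 0` for the vectors `q j = (1, t j)`. This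
condition is invariant under linear maps and under rescaling of each `q j`, so the polygon may be
rotated. For the hexagon the stresses form an explicit line and the sign is read off the long
diagonals. For larger `n`, some `{s, s + 3}` is common to both triangulations on one side of `e`;
contracting the side `{s + 1, s + 2}` gives a flip in the `(n - 1)`-gon. At the degenerate
configuration with `q (s + 1) = q (s + 2)`, stresses push forward injectively to the contracted
polygon, because a vertex with at most four neighbours carries no stress. So positivity holds there
by induction and, by compactness, survives a small splitting of the doubled vector. Positivity
forces independence of both triangulations, and a dependence exists by counting pairs against the
ten trivial motions.
-/

namespace Ngon

/-! ### Two-triangulations as symmetric relations -/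

/-- Two pairs of the relation `T` together with `{i, j}` form three pairwise crossing pairs of the
`n`-gon; the three cases record whether `{i, j}` starts first, second or third. -/
def Obstructed (n : ℕ) (T : ℕ → ℕ → Prop) (i j : ℕ) : Prop :=
  (∃ b c y z, i < b ∧ b < c ∧ c < j ∧ j < y ∧ y < z ∧ z < n ∧ T b y ∧ T c z) ∨
  (∃ a c x z, a < i ∧ i < c ∧ c < x ∧ x < j ∧ j < z ∧ z < n ∧ T a x ∧ T c z) ∨
  (∃ a b x y, a < b ∧ b < i ∧ i < x ∧ x < y ∧ y < j ∧ T a x ∧ T b y)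

/-- The 2-triangulations of the `n`-gon with vertices `0, …, n - 1`, encoded as symmetric relations
on `ℕ`; pairs with an endpoint outside the polygon and diagonal pairs are unconstrained. -/
structure IsTwoTriangulation (n : ℕ) (T : ℕ → ℕ → Prop) : Prop where
  symm : ∀ i j, T i j → T j i
  not_crossing : ∀ a b c d e f, a < b → b < c → c < d → d < e → e < f → f < n →
    T a d → T b e → ¬T c f
  obstructed : ∀ i j, i < j → j < n → ¬T i j → Obstructed n T i j

namespace IsTwoTriangulation

variable {n : ℕ} {S T : ℕ → ℕ → Prop}

theorem mem_of_short (hT : IsTwoTriangulation n T) {i j : ℕ} (hij : i < j) (hj : j < n)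
    (hshort : j ≤ i + 2 ∨ i + n ≤ j + 2) : T i j := by
  by_contra hnot
  rcases hT.obstructed i j hij hj hnot with
    ⟨b, c, y, z, h⟩ | ⟨a, c, x, z, h⟩ | ⟨a, b, x, y, h⟩ <;> omega

theorem mem_of_le (hT : IsTwoTriangulation n T) (hS : IsTwoTriangulation n S)
    (hTS : ∀ i j, i < n → j < n → T i j → S i j) {i j : ℕ} (hi : i < n) (hj : j < n)
    (hij : i ≠ j) (hSij : S i j) : T i j := by
  wlog hlt : i < j generalizing i j
  · exact hT.symm _ _ (this hj hi hij.symm (hS.symm _ _ hSij) (by omega))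
  by_contra hnot
  rcases hT.obstructed i j hlt hj hnot with
    ⟨b, c, y, z, h₁, h₂, h₃, h₄, h₅, h₆, hby, hcz⟩ |
    ⟨a, c, x, z, h₁, h₂, h₃, h₄, h₅, h₆, hax, hcz⟩ | ⟨a, b, x, y, h₁, h₂, h₃, h₄, h₅, hax, hby⟩
  · exact hS.not_crossing i b c j y z h₁ h₂ h₃ h₄ h₅ h₆ hSij
      (hTS _ _ (by omega) (by omega) hby) (hTS _ _ (by omega) h₆ hcz)
  · exact hS.not_crossing a i c x j z h₁ h₂ h₃ h₄ h₅ h₆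
      (hTS _ _ (by omega) (by omega) hax) hSij (hTS _ _ (by omega) h₆ hcz)
  · exact hS.not_crossing a b i x y j h₁ h₂ h₃ h₄ h₅ hj
      (hTS _ _ (by omega) (by omega) hax) (hTS _ _ (by omega) (by omega) hby) hSij

theorem exists_ear_le (hT : IsTwoTriangulation n T) {a b : ℕ} (hab : a + 3 ≤ b) (hb : b < n)
    (hTab : T a b) : ∃ s, a ≤ s ∧ s + 3 ≤ b ∧ T s (s + 3) := by
  induction hk : b - a using Nat.strong_induction_on generalizing a b with
  | _ k ih =>
  subst hk
  by_cases hear : T a (a + 3)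
  · exact ⟨a, le_rfl, hab, hear⟩
  have : a + 3 ≠ b := by rintro rfl; exact hear hTab
  rcases hT.obstructed a (a + 3) (by omega) (by omega) hear with
    ⟨b', c, y, z, h₁, h₂, h₃, h₄, h₅, h₆, hby, hcz⟩ |
    ⟨a', c, x, z, h₁, h₂, h₃, h₄, h₅, h₆, hax, hcz⟩ |
    ⟨a', b', x, y, h₁, h₂, h₃, h₄, h₅, hax, hby⟩
  · have hyb : y ≤ b := by
      by_contra! hby'
      exact hT.not_crossing a b' c b y z h₁ h₂ (by omega) hby' h₅ h₆ hTab hby hcz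
    obtain ⟨s, hs⟩ := ih _ (by omega) (by omega) (by omega) hby rfl
    exact ⟨s, by omega, by omega, hs.2.2⟩
  · have hzb : z ≤ b := by
      by_contra! hbz
      exact hT.not_crossing a' a c x b z h₁ h₂ h₃ (by omega) hbz h₆ hax hTab hcz
    obtain ⟨s, hs⟩ := ih _ (by omega) (by omega) (by omega) hcz rfl
    exact ⟨s, by omega, by omega, hs.2.2⟩
  · exact (hT.not_crossing a' b' a x y b h₁ h₂ h₃ h₄ (by omega) hb hax hby hTab).elim

theorem le_of_ear (hT : IsTwoTriangulation n T) (hear : T 0 3) {a b : ℕ} (ha : 4 ≤ a)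
    (hb : b < n) (h1a : T 1 a) (h2b : T 2 b) : b ≤ a := by
  by_contra! hab
  exact hT.not_crossing 0 1 2 3 a b (by omega) (by omega) (by omega) (by omega) hab hb hear h1a h2b

theorem mem_one_of_isGreatest (hT : IsTwoTriangulation n T) {c : ℕ}
    (hc : IsGreatest {b | 4 ≤ b ∧ b < n ∧ T 2 b} c) : T 1 c := by
  obtain ⟨⟨h4c, hcn, h2c⟩, hmax⟩ := hc
  have hmax' : ∀ y, c < y → y < n → ¬T 2 y := fun y hcy hyn h2y =>
    (hmax ⟨by omega, hyn, h2y⟩).not_gt hcy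
  by_contra hnot
  rcases hT.obstructed 1 c (by omega) hcn hnot with
    ⟨b, d, y, z, h₁, h₂, h₃, h₄, h₅, h₆, hby, hdz⟩ |
    ⟨a, d, x, z, h₁, h₂, h₃, h₄, h₅, h₆, hax, hdz⟩ | ⟨a, b, x, y, h⟩
  · rcases (show 2 ≤ b from h₁).eq_or_lt with rfl | h2b
    · exact hmax' y h₄ (by omega) hby
    · exact hT.not_crossing 2 b d c y z h2b h₂ h₃ h₄ h₅ h₆ h2c hby hdz
  · rcases (show 2 ≤ d from h₂).eq_or_lt with rfl | h2d
    · exact hmax' z h₅ h₆ hdz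
    · exact hT.not_crossing a 2 d x c z (by omega) h2d h₃ h₄ h₅ h₆ hax h2c hdz
  · omega

theorem mem_two_of_isLeast (hT : IsTwoTriangulation n T) {c : ℕ}
    (hc : IsLeast {a | 4 ≤ a ∧ a < n ∧ T 1 a} c) : T 2 c := by
  obtain ⟨⟨h4c, hcn, h1c⟩, hmin⟩ := hc
  have hmin' : ∀ x, 4 ≤ x → x < c → ¬T 1 x := fun x h4x hxc h1x =>
    (hmin ⟨h4x, by omega, h1x⟩).not_gt hxc
  by_contra hnot
  rcases hT.obstructed 2 c (by omega) hcn hnot with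
    ⟨b, d, y, z, h₁, h₂, h₃, h₄, h₅, h₆, hby, hdz⟩ |
    ⟨a, d, x, z, h₁, h₂, h₃, h₄, h₅, h₆, hax, hdz⟩ | ⟨a, b, x, y, h₁, h₂, h₃, h₄, h₅, -, hby⟩
  · exact hT.not_crossing 1 b d c y z (by omega) h₂ h₃ h₄ h₅ h₆ h1c hby hdz
  · rcases (show a ≤ 1 by omega).eq_or_lt with rfl | ha1
    · exact hmin' x (by omega) h₄ hax
    · exact hT.not_crossing a 1 d x c z ha1 (by omega) h₃ h₄ h₅ h₆ hax h1c hdz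
  · obtain rfl : b = 1 := by omega
    exact hmin' y (by omega) h₅ hby

theorem exists_common_neighbor (hT : IsTwoTriangulation n T) (hn : 6 ≤ n) :
    ∃ c, 4 ≤ c ∧ c < n ∧ T 1 c ∧ T 2 c := by
  by_cases h2 : ∃ b, 4 ≤ b ∧ b < n ∧ T 2 b
  · have hbdd : BddAbove {b | 4 ≤ b ∧ b < n ∧ T 2 b} := ⟨n, fun _ hb => hb.2.1.le⟩
    have hc : IsGreatest _ (sSup {b | 4 ≤ b ∧ b < n ∧ T 2 b}) :=
      ⟨Nat.sSup_mem h2 hbdd, fun _ hb => le_csSup hbdd hb⟩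
    exact ⟨_, hc.1.1, hc.1.2.1, hT.mem_one_of_isGreatest hc, hc.1.2.2⟩
  have h1 : ∃ a, 4 ≤ a ∧ a < n ∧ T 1 a := by
    refine ⟨4, le_rfl, by omega, ?_⟩
    by_contra hnot
    push Not at h2
    rcases hT.obstructed 1 4 (by omega) (by omega) hnot with
      ⟨b, c, y, z, h₁, h₂, h₃, h₄, h₅, h₆, hby, -⟩ |
      ⟨a, c, x, z, -, h₂, h₃, h₄, h₅, h₆, -, hcz⟩ | ⟨a, b, x, y, h⟩
    · obtain rfl : b = 2 := by omega
      exact h2 y h₄.le (by omega) hby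
    · obtain rfl : c = 2 := by omega
      exact h2 z h₅.le h₆ hcz
    · omega
  have hc : IsLeast _ (sInf {a | 4 ≤ a ∧ a < n ∧ T 1 a}) :=
    ⟨Nat.sInf_mem h1, fun _ ha => Nat.sInf_le ha⟩
  exact ⟨_, hc.1.1, hc.1.2.1, hc.1.2.2, hT.mem_two_of_isLeast hc⟩

end IsTwoTriangulation

/-! ### Rotation of the polygon -/

/-- The cyclic successor of a vertex of the `n`-gon. -/
def next (n i : ℕ) : ℕ := if i + 1 = n then 0 else i + 1

/-- The cyclic predecessor of a vertex of the `n`-gon. -/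
def prev (n i : ℕ) : ℕ := if i = 0 then n - 1 else i - 1

/-- The relation `T` with the vertices of the `n`-gon relabelled so that `next n i` becomes `i`. -/
def rotate (n : ℕ) (T : ℕ → ℕ → Prop) (i j : ℕ) : Prop := T (next n i) (next n j)

section Rotate

variable {n i j : ℕ} {T : ℕ → ℕ → Prop}

theorem next_of_lt (hi : i + 1 < n) : next n i = i + 1 := if_neg hi.ne

theorem next_last (hi : i + 1 = n) : next n i = 0 := if_pos hi

theorem next_lt (hi : i < n) : next n i < n := by grind [next]

theorem prev_lt (hi : i < n) : prev n i < n := by grind [prev]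

theorem next_prev (hi : i < n) : next n (prev n i) = i := by grind [next, prev]

theorem prev_next (hi : i < n) : prev n (next n i) = i := by grind [next, prev]

theorem bijOn_next (n : ℕ) : Set.BijOn (next n) (Finset.range n) (Finset.range n) :=
  Set.InvOn.bijOn (f' := prev n)
    ⟨fun _ hi => prev_next (Finset.mem_range.1 hi), fun _ hi => next_prev (Finset.mem_range.1 hi)⟩
    (fun _ hi => Finset.mem_range.2 (next_lt (Finset.mem_range.1 hi)))
    (fun _ hi => Finset.mem_range.2 (prev_lt (Finset.mem_range.1 hi)))

theorem rotate_prev (hi : i < n) (hj : j < n) : rotate n T (prev n i) (prev n j) ↔ T i j := by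
  rw [rotate, next_prev hi, next_prev hj]

theorem rotate_pred (hi : 0 < i) (hij : i < j) (hj : j < n) (h : T i j) :
    rotate n T (i - 1) (j - 1) := by
  have hj0 : j ≠ 0 := by omega
  simpa only [prev, hi.ne', hj0, if_false] using (rotate_prev (by omega) hj).2 h

theorem rotate_pred_last (hj : 0 < j) (hjn : j < n) (h : T j 0) :
    rotate n T (j - 1) (n - 1) := by
  simpa only [prev, hj.ne', if_false, if_true] using (rotate_prev hjn (by omega)).2 h

theorem Obstructed.rotate_zero (h : Obstructed n T 0 (i + 1)) :
    Obstructed n (rotate n T) i (n - 1) := by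
  rcases h with ⟨b, c, y, z, h₁, h₂, h₃, h₄, h₅, h₆, hby, hcz⟩ | ⟨a, c, x, z, h⟩ | ⟨a, b, x, y, h⟩
  · exact .inr <| .inr ⟨b - 1, c - 1, y - 1, z - 1, by omega, by omega, by omega, by omega,
      by omega, rotate_pred h₁ (by omega) (by omega) hby, rotate_pred (by omega) (by omega) h₆ hcz⟩
  · omega
  · omega

theorem Obstructed.rotate_succ (hsymm : ∀ i j, T i j → T j i) (hj : j + 1 < n)
    (h : Obstructed n T (i + 1) (j + 1)) : Obstructed n (rotate n T) i j := by
  rcases h with ⟨b, c, y, z, h₁, h₂, h₃, h₄, h₅, h₆, hby, hcz⟩ |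
    ⟨a, c, x, z, h₁, h₂, h₃, h₄, h₅, h₆, hax, hcz⟩ | ⟨a, b, x, y, h₁, h₂, h₃, h₄, h₅, hax, hby⟩
  · exact .inl ⟨b - 1, c - 1, y - 1, z - 1, by omega, by omega, by omega, by omega, by omega,
      by omega, rotate_pred (by omega) (by omega) (by omega) hby,
      rotate_pred (by omega) (by omega) h₆ hcz⟩
  · have hcz' := rotate_pred (by omega) (by omega) h₆ hcz
    rcases Nat.eq_zero_or_pos a with rfl | ha
    · exact .inl ⟨c - 1, x - 1, z - 1, n - 1, by omega, by omega, by omega, by omega, by omega,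
        by omega, hcz', rotate_pred_last (by omega) (by omega) (hsymm _ _ hax)⟩
    · exact .inr <| .inl ⟨a - 1, c - 1, x - 1, z - 1, by omega, by omega, by omega, by omega,
        by omega, by omega, rotate_pred ha (by omega) (by omega) hax, hcz'⟩
  · have hyn : y < n := by omega
    have hby' := rotate_pred (by omega) (by omega) hyn hby
    rcases Nat.eq_zero_or_pos a with rfl | ha
    · exact .inr <| .inl ⟨b - 1, x - 1, y - 1, n - 1, by omega, by omega, by omega, by omega,
        by omega, by omega, hby', rotate_pred_last (by omega) (by omega) (hsymm _ _ hax)⟩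
    · exact .inr <| .inr ⟨a - 1, b - 1, x - 1, y - 1, by omega, by omega, by omega, by omega,
        by omega, rotate_pred ha (by omega) (by omega) hax, hby'⟩

theorem IsTwoTriangulation.rotate (hT : IsTwoTriangulation n T) :
    IsTwoTriangulation n (rotate n T) where
  symm _ _ h := hT.symm _ _ h
  not_crossing a b c d e f hab hbc hcd hde hef hf had hbe hcf := by
    simp only [Ngon.rotate, next_of_lt (show a + 1 < n by omega),
      next_of_lt (show b + 1 < n by omega), next_of_lt (show c + 1 < n by omega),
      next_of_lt (show d + 1 < n by omega), next_of_lt (show e + 1 < n by omega)] at had hbe hcf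
    rcases (show f + 1 ≤ n from hf).eq_or_lt with hlast | hlt
    · rw [next_last hlast] at hcf
      exact hT.not_crossing 0 (a + 1) (b + 1) (c + 1) (d + 1) (e + 1) (by omega) (by omega)
        (by omega) (by omega) (by omega) (by omega) (hT.symm _ _ hcf) had hbe
    · rw [next_of_lt hlt] at hcf
      exact hT.not_crossing (a + 1) (b + 1) (c + 1) (d + 1) (e + 1) (f + 1) (by omega) (by omega)
        (by omega) (by omega) (by omega) hlt had hbe hcf
  obstructed i j hij hj hnot := by
    rw [Ngon.rotate, next_of_lt (show i + 1 < n by omega)] at hnot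
    rcases (show j + 1 ≤ n from hj).eq_or_lt with hlast | hlt
    · rw [next_last hlast] at hnot
      obtain rfl : j = n - 1 := by omega
      exact (hT.obstructed 0 (i + 1) (by omega) (by omega) (hnot ∘ hT.symm _ _)).rotate_zero
    · rw [next_of_lt hlt] at hnot
      exact (hT.obstructed (i + 1) (j + 1) (by omega) hlt hnot).rotate_succ hT.symm hlt

end Rotate

/-! ### Contraction of the side `{1, 2}` -/

/-- The map of vertices identifying `1` with `2` and closing the gap. -/
def merge (i : ℕ) : ℕ := if i ≤ 1 then i else i - 1

/-- The image of the relation `T` when the vertices `1` and `2` are identified. -/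
def contract (T : ℕ → ℕ → Prop) : ℕ → ℕ → Prop := Relation.Map T merge merge

section Contract

variable {n i j : ℕ} {T : ℕ → ℕ → Prop}

theorem merge_lt (hn : 2 ≤ n) (hi : i < n + 1) : merge i < n := by grind [merge]

theorem merge_lt_merge (hij : i < j) (hne : ¬(i = 1 ∧ j = 2)) : merge i < merge j := by
  grind [merge]

theorem lt_of_merge_lt (h : merge i < n) : i < n + 1 := by grind [merge]

theorem lt_of_merge_lt_merge (h : merge i < merge j) : i < j := by grind [merge]

theorem contract_merge (h : T i j) : contract T (merge i) (merge j) := ⟨i, j, h, rfl, rfl⟩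

theorem IsTwoTriangulation.obstructed_contract (hT : IsTwoTriangulation (n + 1) T) (hn : 5 ≤ n)
    (hear : T 0 3) (hj : j < n + 1) (hone : i = 1 → ∀ y, j < y → y < n + 1 → ¬T 2 y)
    (htwo : i = 2 → ∀ x, 4 ≤ x → x < j → ¬T 1 x) (h : Obstructed (n + 1) T i j) :
    Obstructed n (contract T) (merge i) (merge j) := by
  rcases h with ⟨b, c, y, z, h₁, h₂, h₃, h₄, h₅, h₆, hby, hcz⟩ |
    ⟨a, c, x, z, h₁, h₂, h₃, h₄, h₅, h₆, hax, hcz⟩ | ⟨a, b, x, y, h₁, h₂, h₃, h₄, h₅, hax, hby⟩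
  · refine .inl ⟨_, _, _, _, merge_lt_merge h₁ ?_, merge_lt_merge h₂ ?_,
      merge_lt_merge h₃ (by omega), merge_lt_merge h₄ (by omega), merge_lt_merge h₅ (by omega),
      merge_lt (by omega) h₆, contract_merge hby, contract_merge hcz⟩
    · rintro ⟨rfl, rfl⟩; exact hone rfl y h₄ (by omega) hby
    · rintro ⟨rfl, rfl⟩; exact (hT.le_of_ear hear (by omega) h₆ hby hcz).not_gt h₅
  · refine .inr <| .inl ⟨_, _, _, _, merge_lt_merge h₁ ?_, merge_lt_merge h₂ ?_,
      merge_lt_merge h₃ (by omega), merge_lt_merge h₄ (by omega), merge_lt_merge h₅ (by omega),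
      merge_lt (by omega) h₆, contract_merge hax, contract_merge hcz⟩
    · rintro ⟨rfl, rfl⟩; exact htwo rfl x (by omega) h₄ hax
    · rintro ⟨rfl, rfl⟩; exact hone rfl z h₅ h₆ hcz
  · refine .inr <| .inr ⟨_, _, _, _, merge_lt_merge h₁ ?_, merge_lt_merge h₂ ?_,
      merge_lt_merge h₃ (by omega), merge_lt_merge h₄ (by omega), merge_lt_merge h₅ (by omega),
      contract_merge hax, contract_merge hby⟩
    · rintro ⟨rfl, rfl⟩; exact (hT.le_of_ear hear (by omega) (by omega) hax hby).not_gt h₄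
    · rintro ⟨rfl, rfl⟩; exact htwo rfl y (by omega) h₅ hby

-- A missing pair `{1, j}` of the contraction has two lifts; the position of `j` relative to the
-- common neighbour of `1` and `2` decides which one has an obstruction that survives.
theorem IsTwoTriangulation.exists_lift (hT : IsTwoTriangulation (n + 1) T) (hn : 5 ≤ n)
    (hear : T 0 3) (hij : i < j) (hj : j < n) (hnot : ¬contract T i j) :
    ∃ i' j', i' < j' ∧ j' < n + 1 ∧ merge i' = i ∧ merge j' = j ∧
      (i' = 1 → ∀ y, j' < y → y < n + 1 → ¬T 2 y) ∧ (i' = 2 → ∀ x, 4 ≤ x → x < j' → ¬T 1 x) := by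
  have hmerge : ∀ k, k ≠ 0 → merge (k + 1) = k := by grind [merge]
  obtain ⟨c, h4c, hcn, h1c, h2c⟩ := hT.exists_common_neighbor (by omega)
  rcases eq_or_ne i 1 with rfl | hi
  · rcases lt_trichotomy c (j + 1) with hlt | rfl | hgt
    · exact ⟨1, j + 1, by omega, by omega, rfl, hmerge j (by omega),
        fun _ y hy hyn h2y => by have := hT.le_of_ear hear h4c hyn h1c h2y; omega, by omega⟩
    · exact (hnot ⟨1, j + 1, h1c, rfl, hmerge j (by omega)⟩).elim
    · exact ⟨2, j + 1, by omega, by omega, rfl, hmerge j (by omega), by omega,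
        fun _ x hx hxj h1x => by have := hT.le_of_ear hear hx hcn h1x h2c; omega⟩
  rcases Nat.eq_zero_or_pos i with rfl | hi0
  · rcases eq_or_ne j 1 with rfl | hj1
    · exact (hnot ⟨0, 1, hT.mem_of_short (by omega) (by omega) (by omega), rfl, rfl⟩).elim
    · exact ⟨0, j + 1, by omega, by omega, rfl, hmerge j (by omega), by omega, by omega⟩
  · exact ⟨i + 1, j + 1, by omega, by omega, hmerge i (by omega), hmerge j (by omega), by omega,
      by omega⟩

theorem IsTwoTriangulation.contract (hT : IsTwoTriangulation (n + 1) T) (hn : 5 ≤ n)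
    (hear : T 0 3) : IsTwoTriangulation n (contract T) where
  symm := fun _ _ ⟨i, j, hij, hi, hj⟩ => ⟨j, i, hT.symm i j hij, hj, hi⟩
  not_crossing := by
    rintro _ _ _ _ _ _ hab hbc hcd hde hef hf ⟨a, d, had, rfl, rfl⟩ ⟨b, e, hbe, rfl, rfl⟩
      ⟨c, f, hcf, rfl, rfl⟩
    exact hT.not_crossing a b c d e f (lt_of_merge_lt_merge hab) (lt_of_merge_lt_merge hbc)
      (lt_of_merge_lt_merge hcd) (lt_of_merge_lt_merge hde) (lt_of_merge_lt_merge hef)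
      (lt_of_merge_lt hf) had hbe hcf
  obstructed i j hij hj hnot := by
    obtain ⟨i', j', hij', hj', rfl, rfl, hone, htwo⟩ := hT.exists_lift hn hear hij hj hnot
    exact hT.obstructed_contract hn hear hj' hone htwo
      (hT.obstructed i' j' hij' hj' (hnot ∘ contract_merge))

end Contract

/-! ### The number of pairs -/

open Classical in
/-- The pairs of `T` inside the `n`-gon, each listed once in increasing order. -/
noncomputable def edges (n : ℕ) (T : ℕ → ℕ → Prop) : Finset (ℕ × ℕ) :=
  {p ∈ Finset.range n ×ˢ Finset.range n | p.1 < p.2 ∧ T p.1 p.2}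

section Edges

variable {n : ℕ} {T : ℕ → ℕ → Prop}

theorem mem_edges {p : ℕ × ℕ} : p ∈ edges n T ↔ p.1 < p.2 ∧ p.2 < n ∧ T p.1 p.2 := by
  grind [edges]

theorem card_edges_rotate_le (hsymm : ∀ i j, T i j → T j i) :
    (edges n (rotate n T)).card ≤ (edges n T).card := by
  refine Finset.card_le_card_of_injOn
    (fun p => (min (next n p.1) (next n p.2), max (next n p.1) (next n p.2))) ?_ ?_
  · intro p hp
    simp only [Finset.mem_coe, mem_edges, rotate] at hp ⊢
    grind [next]
  · intro p hp p' hp' heq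
    simp only [Finset.mem_coe, mem_edges] at hp hp'
    grind [next]

-- Contraction collapses `{1, 2}` and merges `{0, 1}`, `{1, 3}`, `{1, c}` with `{0, 2}`, `{2, 3}`,
-- `{2, c}`.
theorem IsTwoTriangulation.edges_contract_subset (hT : IsTwoTriangulation (n + 1) T) (hn : 5 ≤ n)
    {c : ℕ} (h4c : 4 ≤ c) (h2c : T 2 c) :
    edges n (Ngon.contract T) ⊆
      (edges (n + 1) T \ {(1, 2), (0, 1), (1, 3), (1, c)}).image (Prod.map merge merge) := by
  rintro ⟨_, _⟩ hp
  obtain ⟨hij, hj, i, j, hTij, rfl, rfl⟩ := mem_edges.1 hp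
  have hlt := lt_of_merge_lt_merge hij
  have hjn := lt_of_merge_lt hj
  suffices h : ∃ k l, k < l ∧ l < n + 1 ∧ T k l ∧
      (k, l) ∉ ({(1, 2), (0, 1), (1, 3), (1, c)} : Finset (ℕ × ℕ)) ∧
      merge k = merge i ∧ merge l = merge j by
    obtain ⟨k, l, hkl, hl, hTkl, hkept, hk, hl'⟩ := h
    exact Finset.mem_image.2 ⟨(k, l), Finset.mem_sdiff.2 ⟨mem_edges.2 ⟨hkl, hl, hTkl⟩, hkept⟩,
      Prod.ext hk hl'⟩
  by_cases hmem : (i, j) ∈ ({(1, 2), (0, 1), (1, 3), (1, c)} : Finset (ℕ × ℕ))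
  · simp only [Finset.mem_insert, Finset.mem_singleton, Prod.mk.injEq] at hmem
    rcases hmem with ⟨rfl, rfl⟩ | ⟨rfl, rfl⟩ | ⟨rfl, rfl⟩ | ⟨rfl, rfl⟩
    · exact (lt_irrefl _ hij).elim
    · exact ⟨0, 2, by omega, by omega, hT.mem_of_short (by omega) (by omega) (by omega), by simp,
        rfl, rfl⟩
    · exact ⟨2, 3, by omega, by omega, hT.mem_of_short (by omega) (by omega) (by omega), by simp,
        rfl, rfl⟩
    · exact ⟨2, j, by omega, hjn, h2c, by simp, rfl, rfl⟩
  · exact ⟨i, j, hlt, hjn, hTij, hmem, rfl, rfl⟩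

theorem IsTwoTriangulation.card_edges_contract_add_four_le (hT : IsTwoTriangulation (n + 1) T)
    (hn : 5 ≤ n) : (edges n (Ngon.contract T)).card + 4 ≤ (edges (n + 1) T).card := by
  obtain ⟨c, h4c, hcn, h1c, h2c⟩ := hT.exists_common_neighbor (by omega)
  have hlost : {(1, 2), (0, 1), (1, 3), (1, c)} ⊆ edges (n + 1) T := by
    have hshort : ∀ i j, i < j → j ≤ i + 2 → j < n + 1 → T i j := fun i j hij hle hj =>
      hT.mem_of_short hij hj (.inl hle)
    simp only [Finset.insert_subset_iff, Finset.singleton_subset_iff, mem_edges]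
    grind
  have hcard : ({(1, 2), (0, 1), (1, 3), (1, c)} : Finset (ℕ × ℕ)).card = 4 := by grind
  have hle := (Finset.card_le_card (hT.edges_contract_subset hn h4c h2c)).trans
    Finset.card_image_le
  have := Finset.card_le_card hlost
  rw [Finset.card_sdiff_of_subset hlost] at hle
  omega

theorem IsTwoTriangulation.ten_le_card_edges (hT : IsTwoTriangulation 5 T) :
    10 ≤ (edges 5 T).card := by
  have hsub : ({p ∈ Finset.range 5 ×ˢ Finset.range 5 | p.1 < p.2} : Finset (ℕ × ℕ)) ⊆
      edges 5 T := by
    intro p hp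
    simp only [Finset.mem_filter, Finset.mem_product, Finset.mem_range] at hp
    exact mem_edges.2 ⟨hp.2, hp.1.2, hT.mem_of_short hp.2 hp.1.2 (by omega)⟩
  exact le_of_eq_of_le (by decide) (Finset.card_le_card hsub)

theorem IsTwoTriangulation.exists_ear (hT : IsTwoTriangulation n T) (hn : 5 ≤ n) :
    ∃ s, s + 3 < n ∧ T s (s + 3) := by
  obtain ⟨s, -, hs, hear⟩ := hT.exists_ear_le (a := 0) (b := n - 2) (by omega) (by omega)
    (hT.mem_of_short (by omega) (by omega) (by omega))
  exact ⟨s, by omega, hear⟩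

theorem IsTwoTriangulation.four_mul_le_card_edges_add_ten (hT : IsTwoTriangulation n T)
    (hn : 5 ≤ n) : 4 * n ≤ (edges n T).card + 10 := by
  induction n, hn using Nat.le_induction generalizing T with
  | base => have := hT.ten_le_card_edges; omega
  | succ n hn ih =>
    obtain ⟨s, hs, hear⟩ := hT.exists_ear (by omega)
    induction s generalizing T with
    | zero =>
      have := ih (hT.contract hn hear)
      have := hT.card_edges_contract_add_four_le hn
      omega
    | succ s ihs =>
      have hear' : Ngon.rotate (n + 1) T s (s + 3) := by
        rwa [Ngon.rotate, next_of_lt (by omega), next_of_lt (by omega), Nat.add_right_comm]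
      have := ihs hT.rotate (by omega) hear'
      have := card_edges_rotate_le (n := n + 1) hT.symm
      omega

end Edges

/-! ### Flips -/

/-- `{e.1, e.2}` is the only pair of the `n`-gon that belongs to `T` but not to `T'`. The order of
the endpoints of `e` is irrelevant. -/
structure IsSoleDiff (n : ℕ) (T T' : ℕ → ℕ → Prop) (e : ℕ × ℕ) : Prop where
  fst_lt : e.1 < n
  snd_lt : e.2 < n
  ne : e.1 ≠ e.2
  mem : T e.1 e.2
  notMem : ¬T' e.1 e.2
  mem_or_eq : ∀ i j, i < n → j < n → T i j → T' i j ∨ s(i, j) = s(e.1, e.2)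

/-- The 2-triangulations `T₁` and `T₂` are related by the flip replacing `e` with `f`. -/
structure IsFlip (n : ℕ) (T₁ T₂ : ℕ → ℕ → Prop) (e f : ℕ × ℕ) : Prop where
  left : IsTwoTriangulation n T₁
  right : IsTwoTriangulation n T₂
  diff_left : IsSoleDiff n T₁ T₂ e
  diff_right : IsSoleDiff n T₂ T₁ f

section Flip

variable {n : ℕ} {T T' T₁ T₂ : ℕ → ℕ → Prop} {e f : ℕ × ℕ}

theorem IsSoleDiff.rotate (h : IsSoleDiff n T T' e) :
    IsSoleDiff n (rotate n T) (rotate n T') (Prod.map (prev n) (prev n) e) where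
  fst_lt := prev_lt h.fst_lt
  snd_lt := prev_lt h.snd_lt
  ne heq := h.ne <| by
    rw [← next_prev h.fst_lt, ← next_prev h.snd_lt]
    exact congrArg (next n) heq
  mem := (rotate_prev h.fst_lt h.snd_lt).2 h.mem
  notMem := h.notMem ∘ (rotate_prev h.fst_lt h.snd_lt).1
  mem_or_eq i j hi hj hij := by
    refine (h.mem_or_eq _ _ (next_lt hi) (next_lt hj) hij).imp_right fun heq => ?_
    rw [← prev_next hi, ← prev_next hj]
    exact congrArg (Sym2.map (prev n)) heq

theorem IsSoleDiff.swap (hT : ∀ i j, T i j → T j i) (hT' : ∀ i j, T' i j → T' j i)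
    (h : IsSoleDiff n T T' e) : IsSoleDiff n T T' e.swap where
  fst_lt := h.snd_lt
  snd_lt := h.fst_lt
  ne := h.ne.symm
  mem := hT _ _ h.mem
  notMem := h.notMem ∘ hT' _ _
  mem_or_eq i j hi hj hij := (h.mem_or_eq i j hi hj hij).imp_right fun heq =>
    heq.trans Sym2.eq_swap

theorem IsFlip.rotate (h : IsFlip n T₁ T₂ e f) :
    IsFlip n (rotate n T₁) (rotate n T₂) (Prod.map (prev n) (prev n) e)
      (Prod.map (prev n) (prev n) f) :=
  ⟨h.left.rotate, h.right.rotate, h.diff_left.rotate, h.diff_right.rotate⟩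

theorem IsFlip.swap_left (h : IsFlip n T₁ T₂ e f) : IsFlip n T₁ T₂ e.swap f :=
  ⟨h.left, h.right, h.diff_left.swap h.left.symm h.right.symm, h.diff_right⟩

theorem IsSoleDiff.contract_mem_or_eq (h : IsSoleDiff (n + 1) T T' e) {i j : ℕ} (hi : i < n)
    (hj : j < n) (hij : contract T i j) :
    contract T' i j ∨ s(i, j) = s(merge e.1, merge e.2) := by
  obtain ⟨i, j, hTij, rfl, rfl⟩ := hij
  refine (h.mem_or_eq i j (lt_of_merge_lt hi) (lt_of_merge_lt hj) hTij).imp contract_merge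
    fun heq => ?_
  exact congrArg (Sym2.map merge) heq

theorem IsSoleDiff.contract (h : IsSoleDiff (n + 1) T T' e) (hn : 2 ≤ n)
    (hne : merge e.1 ≠ merge e.2) (hnot : ¬contract T' (merge e.1) (merge e.2)) :
    IsSoleDiff n (contract T) (contract T') (Prod.map merge merge e) where
  fst_lt := merge_lt hn h.fst_lt
  snd_lt := merge_lt hn h.snd_lt
  ne := hne
  mem := contract_merge h.mem
  notMem := hnot
  mem_or_eq _ _ := h.contract_mem_or_eq

theorem IsSoleDiff.eq_of_merge_eq (h : IsSoleDiff (n + 1) T T' e)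
    (h' : IsSoleDiff n (Ngon.contract T) (Ngon.contract T') (Prod.map merge merge e)) {k l : ℕ}
    (hk : k < n + 1) (hl : l < n + 1) (hkl : T k l ∨ T' k l) (hke : merge k = merge e.1)
    (hle : merge l = merge e.2) : k = e.1 ∧ l = e.2 := by
  have hnot : ¬T' k l := fun hT' => h'.notMem ⟨k, l, hT', hke, hle⟩
  have heq := (h.mem_or_eq k l hk hl (hkl.resolve_right hnot)).resolve_left hnot
  rcases Sym2.eq_iff.1 heq with heq | ⟨-, hl₁⟩
  · exact heq
  · exact (h'.ne (by rw [Prod.map_fst, Prod.map_snd, ← hle, hl₁])).elim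

theorem merge_injective_of_ne {i j : ℕ} (hj1 : j ≠ 1) (hj2 : j ≠ 2) (h : merge i = merge j) :
    i = j := by
  grind [merge]

theorem IsFlip.merge_right_ne (h : IsFlip (n + 1) T₁ T₂ e f) (hn : 2 ≤ n) :
    merge f.1 ≠ merge f.2 := by
  intro heq
  have h12 : T₁ 1 2 := h.left.mem_of_short (by omega) (by omega) (by omega)
  have hf : (f.1 = 1 ∧ f.2 = 2) ∨ (f.1 = 2 ∧ f.2 = 1) := by
    have := h.diff_right.ne
    grind [merge]
  rcases hf with ⟨h₁, h₂⟩ | ⟨h₁, h₂⟩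
  · exact h.diff_right.notMem (by rwa [h₁, h₂])
  · exact h.diff_right.notMem (by rw [h₁, h₂]; exact h.left.symm _ _ h12)

theorem IsFlip.contract (h : IsFlip (n + 1) T₁ T₂ e f) (hn : 5 ≤ n) (hear₁ : T₁ 0 3)
    (hear₂ : T₂ 0 3) (he₁ : e.1 ≠ 1 ∧ e.1 ≠ 2) (he₂ : e.2 ≠ 1 ∧ e.2 ≠ 2) :
    IsFlip n (contract T₁) (contract T₂) (Prod.map merge merge e) (Prod.map merge merge f) := by
  have hleft := h.left.contract hn hear₁
  have hright := h.right.contract hn hear₂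
  have hdiff : IsSoleDiff n (Ngon.contract T₁) (Ngon.contract T₂) (Prod.map merge merge e) := by
    refine h.diff_left.contract (by omega)
      (fun heq => h.diff_left.ne (merge_injective_of_ne he₂.1 he₂.2 heq)) ?_
    rintro ⟨i, j, hij, hi, hj⟩
    rw [merge_injective_of_ne he₁.1 he₁.2 hi, merge_injective_of_ne he₂.1 he₂.2 hj] at hij
    exact h.diff_left.notMem hij
  refine ⟨hleft, hright, hdiff,
    h.diff_right.contract (by omega) (h.merge_right_ne (by omega)) fun hf => ?_⟩
  -- Otherwise the contraction of `T₂` would be properly contained in that of `T₁`.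
  refine hdiff.notMem (hright.mem_of_le hleft (fun i j hi hj hij => ?_) hdiff.fst_lt hdiff.snd_lt
    hdiff.ne hdiff.mem)
  rcases h.diff_right.contract_mem_or_eq hi hj hij with hij' | heq
  · exact hij'
  · rcases Sym2.eq_iff.1 heq with ⟨rfl, rfl⟩ | ⟨rfl, rfl⟩
    · exact hf
    · exact hleft.symm _ _ hf

end Flip

/-! ### Stresses of planar vector configurations -/

/-- The vectors `q 0, …, q (n - 1)` lie in counterclockwise order in an open half-plane. -/
def IsCyclic (n : ℕ) (q : ℕ → ℝ × ℝ) : Prop := ∀ i j, i < j → j < n → 0 < det2 (q i) (q j)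

/-- An antisymmetric weight `w` on the pairs of `U` is a stress of the configuration `q` if every
`∑ j, w i j • q j ^ 3` vanishes in the third symmetric power of the plane; that power is tested
against products of three linear forms `det2 p`. For `q j = (1, t j)` these are the stresses
`w i j / (t j - t i)` of the bar-and-joint framework of the points
`(t j, t j ^ 2, t j ^ 3, t j ^ 4)`. -/
structure IsStress (n : ℕ) (U : ℕ → ℕ → Prop) (q : ℕ → ℝ × ℝ) (w : ℕ → ℕ → ℝ) : Prop where
  antisymm : ∀ i j, w i j = -w j i
  support : ∀ i j, ¬(i < n ∧ j < n ∧ U i j) → w i j = 0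
  equilibrium : ∀ i, ∀ p₁ p₂ p₃ : ℝ × ℝ,
    ∑ j ∈ Finset.range n, w i j * (det2 p₁ (q j) * det2 p₂ (q j) * det2 p₃ (q j)) = 0

/-- The weight of the pair `e` in the stress `w`, multiplied by `det2 (q e.1) (q e.2)` to make it
independent of the order of the endpoints. -/
def pairStress (q : ℕ → ℝ × ℝ) (w : ℕ → ℕ → ℝ) (e : ℕ × ℕ) : ℝ :=
  w e.1 e.2 * det2 (q e.1) (q e.2)

/-- Every nonzero stress of `q` on `U` gives the pairs `e` and `f` weights of the same sign. -/
def PositiveStresses (n : ℕ) (U : ℕ → ℕ → Prop) (e f : ℕ × ℕ) (q : ℕ → ℝ × ℝ) : Prop :=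
  ∀ w, IsStress n U q w → w ≠ 0 → 0 < pairStress q w e * pairStress q w f

/-- Some cyclic configuration has only positive stresses on the union of `T₁` and `T₂`. -/
def IsRealizable (n : ℕ) (T₁ T₂ : ℕ → ℕ → Prop) (e f : ℕ × ℕ) : Prop :=
  ∃ q, IsCyclic n q ∧ PositiveStresses n (T₁ ⊔ T₂) e f q

section Stress

variable {n : ℕ} {U U' T₁ T₂ : ℕ → ℕ → Prop} {q q' : ℕ → ℝ × ℝ} {w : ℕ → ℕ → ℝ} {e f : ℕ × ℕ}

theorem det2_self (u : ℝ × ℝ) : det2 u u = 0 := by rw [det2]; ring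

theorem det2_swap (u v : ℝ × ℝ) : det2 v u = -det2 u v := by rw [det2, det2]; ring

theorem det2_smul_left (c : ℝ) (u v : ℝ × ℝ) : det2 (c • u) v = c * det2 u v := by
  simp only [det2, Prod.smul_fst, Prod.smul_snd, smul_eq_mul]
  ring

theorem det2_smul_right (c : ℝ) (u v : ℝ × ℝ) : det2 u (c • v) = c * det2 u v := by
  rw [det2_swap, det2_smul_left, det2_swap u v, mul_neg, neg_neg]

theorem det2_add_left (u u' v : ℝ × ℝ) : det2 (u + u') v = det2 u v + det2 u' v := by
  simp only [det2, Prod.fst_add, Prod.snd_add]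
  ring

theorem det2_add_right (u v v' : ℝ × ℝ) : det2 u (v + v') = det2 u v + det2 u v' := by
  rw [det2_swap, det2_add_left, det2_swap u v, det2_swap u v', neg_add, neg_neg, neg_neg]

theorem IsCyclic.det2_ne_zero (hq : IsCyclic n q) {i j : ℕ} (hi : i < n) (hj : j < n)
    (hij : i ≠ j) : det2 (q i) (q j) ≠ 0 := by
  rcases lt_or_gt_of_ne hij with h | h
  · exact (hq i j h hj).ne'
  · rw [det2_swap]
    exact neg_ne_zero.2 (hq j i h hi).ne'

theorem IsStress.self_eq_zero (hw : IsStress n U q w) (i : ℕ) : w i i = 0 :=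
  self_eq_neg.1 (hw.antisymm i i)

theorem IsStress.mem_of_ne_zero (hw : IsStress n U q w) {i j : ℕ} (h : w i j ≠ 0) :
    i < n ∧ j < n ∧ U i j :=
  not_not.1 fun h' => h (hw.support i j h')

theorem IsStress.smul (hw : IsStress n U q w) (c : ℝ) : IsStress n U q (c • w) where
  antisymm i j := by
    simp only [Pi.smul_apply, smul_eq_mul]
    rw [hw.antisymm i j, mul_neg]
  support i j h := by
    simp only [Pi.smul_apply, smul_eq_mul]
    rw [hw.support i j h, mul_zero]
  equilibrium i p₁ p₂ p₃ := by
    simp only [Pi.smul_apply, smul_eq_mul, mul_assoc c]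
    rw [← Finset.mul_sum, hw.equilibrium, mul_zero]

theorem pairStress_smul (c : ℝ) : pairStress q (c • w) e = c * pairStress q w e :=
  mul_assoc c _ _

theorem IsStress.pairStress_swap (hw : IsStress n U q w) :
    pairStress q w e.swap = pairStress q w e := by
  rw [pairStress, pairStress, Prod.fst_swap, Prod.snd_swap, hw.antisymm, det2_swap, neg_mul_neg]

theorem IsRealizable.of_swap_left (h : IsRealizable n T₁ T₂ e.swap f) :
    IsRealizable n T₁ T₂ e f := by
  obtain ⟨q, hq, hpos⟩ := h
  exact ⟨q, hq, fun w hw hne => hw.pairStress_swap (e := e) ▸ hpos w hw hne⟩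

theorem IsStress.reindex {π : ℕ → ℕ} {c : ℕ → ℝ} (hw : IsStress n U q w)
    (hπ : Set.BijOn π (Finset.range n) (Finset.range n)) (hlt : ∀ i, π i < n → i < n)
    (hq : ∀ i < n, q (π i) = c i • q' i) (hU : ∀ i j, U (π i) (π j) → U' i j) :
    IsStress n U' q' fun i j => c i ^ 3 * c j ^ 3 * w (π i) (π j) where
  antisymm i j := by
    rw [hw.antisymm (π i)]
    ring
  support i j h := by
    rw [hw.support _ _ fun h' => h ⟨hlt i h'.1, hlt j h'.2.1, hU i j h'.2.2⟩, mul_zero]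
  equilibrium i p₁ p₂ p₃ := by
    have hsum := hw.equilibrium (π i) p₁ p₂ p₃
    rw [← Finset.sum_nbij π hπ.mapsTo hπ.injOn hπ.surjOn fun _ _ => rfl] at hsum
    rw [← mul_zero (c i ^ 3), ← hsum, Finset.mul_sum]
    refine Finset.sum_congr rfl fun j hj => ?_
    rw [hq j (Finset.mem_range.1 hj)]
    simp only [det2_smul_right]
    ring

theorem PositiveStresses.of_reindex {π : ℕ → ℕ} {c : ℕ → ℝ}
    (h : PositiveStresses n U' e f q') (hπ : Set.BijOn π (Finset.range n) (Finset.range n))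
    (hlt : ∀ i, π i < n → i < n) (hc : ∀ i < n, c i ≠ 0)
    (hq : ∀ i < n, q (π i) = c i • q' i) (hU : ∀ i j, U (π i) (π j) → U' i j)
    (he : e.1 < n ∧ e.2 < n) (hf : f.1 < n ∧ f.2 < n) :
    PositiveStresses n U (Prod.map π π e) (Prod.map π π f) q := by
  intro w hw hne
  have hpair : ∀ g : ℕ × ℕ, g.1 < n ∧ g.2 < n →
      pairStress q' (fun i j => c i ^ 3 * c j ^ 3 * w (π i) (π j)) g =
        (c g.1 * c g.2) ^ 2 * pairStress q w (Prod.map π π g) := by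
    intro g hg
    rw [pairStress, pairStress, Prod.map_fst, Prod.map_snd, hq _ hg.1, hq _ hg.2, det2_smul_left,
      det2_smul_right]
    ring
  have hne' : (fun i j => c i ^ 3 * c j ^ 3 * w (π i) (π j)) ≠ 0 := by
    contrapose! hne
    ext i j
    by_contra hij
    obtain ⟨hi, hj, -⟩ := hw.mem_of_ne_zero hij
    obtain ⟨k, -, rfl⟩ := hπ.surjOn (Finset.mem_coe.2 (Finset.mem_range.2 hi))
    obtain ⟨l, -, rfl⟩ := hπ.surjOn (Finset.mem_coe.2 (Finset.mem_range.2 hj))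
    exact mul_ne_zero (mul_ne_zero (pow_ne_zero 3 (hc k (hlt k hi)))
      (pow_ne_zero 3 (hc l (hlt l hj)))) hij (congrFun₂ hne k l)
  have hpos := h _ (hw.reindex hπ hlt hq hU) hne'
  rw [hpair e he, hpair f hf, mul_mul_mul_comm, ← mul_pow] at hpos
  exact pos_of_mul_pos_right hpos (sq_nonneg _)

theorem IsCyclic.of_next (hq' : IsCyclic n q') (hlast : q 0 = -q' (n - 1))
    (hsucc : ∀ j, q (j + 1) = q' j) : IsCyclic n q := by
  intro i j hij hj
  obtain ⟨j, rfl⟩ := Nat.exists_eq_succ_of_ne_zero (by omega : j ≠ 0)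
  rw [hsucc]
  rcases i with - | i
  · rw [hlast, det2_swap, ← neg_one_smul ℝ (q' _), det2_smul_right, neg_one_mul, neg_neg]
    exact hq' j (n - 1) (by omega) (by omega)
  · rw [hsucc]
    exact hq' i j (by omega) (by omega)

theorem IsRealizable.of_rotate (he : e.1 < n ∧ e.2 < n) (hf : f.1 < n ∧ f.2 < n)
    (h : IsRealizable n (rotate n T₁) (rotate n T₂) (Prod.map (prev n) (prev n) e)
      (Prod.map (prev n) (prev n) f)) : IsRealizable n T₁ T₂ e f := by
  obtain ⟨q', hq', hpos⟩ := h
  have hmap : ∀ g : ℕ × ℕ, g.1 < n ∧ g.2 < n →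
      Prod.map (next n) (next n) (Prod.map (prev n) (prev n) g) = g := fun g hg =>
    Prod.ext (next_prev hg.1) (next_prev hg.2)
  refine ⟨fun | 0 => -q' (n - 1) | j + 1 => q' j, hq'.of_next rfl fun _ => rfl, ?_⟩
  rw [← hmap e he, ← hmap f hf]
  refine hpos.of_reindex (c := fun i => if i + 1 = n then -1 else 1) (bijOn_next n)
    (fun i hi => by grind [next]) (fun i _ => by split_ifs <;> norm_num) (fun i hi => ?_)
    (fun _ _ => id) ⟨prev_lt he.1, prev_lt he.2⟩ ⟨prev_lt hf.1, prev_lt hf.2⟩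
  by_cases hlast : i + 1 = n
  · subst hlast
    simp [next_last rfl]
  · simp [next_of_lt (by omega : i + 1 < n), hlast]

theorem isClosed_isStress {X : Type*} [TopologicalSpace X] {q : X → ℕ → ℝ × ℝ}
    (hq : Continuous q) : IsClosed {x : X × (ℕ → ℕ → ℝ) | IsStress n U (q x.1) x.2} := by
  have hset : {x : X × (ℕ → ℕ → ℝ) | IsStress n U (q x.1) x.2} =
      {x | ∀ i j, x.2 i j = -x.2 j i} ∩ {x | ∀ i j, ¬(i < n ∧ j < n ∧ U i j) → x.2 i j = 0} ∩
      {x | ∀ i, ∀ p₁ p₂ p₃ : ℝ × ℝ, ∑ j ∈ Finset.range n, x.2 i j *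
        (det2 p₁ (q x.1 j) * det2 p₂ (q x.1 j) * det2 p₃ (q x.1 j)) = 0} :=
    Set.ext fun x => ⟨fun h => ⟨⟨h.antisymm, h.support⟩, h.equilibrium⟩,
      fun h => ⟨h.1.1, h.1.2, h.2⟩⟩
  rw [hset]
  simp only [Set.ofPred_forall, det2]
  refine (IsClosed.inter ?_ ?_).inter ?_
  · exact isClosed_iInter fun i => isClosed_iInter fun j => isClosed_eq (by fun_prop) (by fun_prop)
  · exact isClosed_iInter fun i => isClosed_iInter fun j => isClosed_iInter fun _ =>
      isClosed_eq (by fun_prop) (by fun_prop)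
  · exact isClosed_iInter fun i => isClosed_iInter fun p₁ => isClosed_iInter fun p₂ =>
      isClosed_iInter fun p₃ => isClosed_eq (by fun_prop) (by fun_prop)

/-- The unit sphere of the `ℓ¹` norm on the weights of the pairs of the `n`-gon; the remaining
weights are only bounded, which suffices for compactness. -/
def weightSphere (n : ℕ) : Set (ℕ → ℕ → ℝ) :=
  {w | (∀ i j, |w i j| ≤ 1) ∧ ∑ i ∈ Finset.range n, ∑ j ∈ Finset.range n, |w i j| = 1}

theorem isCompact_weightSphere (n : ℕ) : IsCompact (weightSphere n) := by
  have hbox : IsCompact (Set.univ.pi fun _ : ℕ => Set.univ.pi fun _ : ℕ => Set.Icc (-1 : ℝ) 1) :=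
    isCompact_univ_pi fun _ => isCompact_univ_pi fun _ => isCompact_Icc
  refine hbox.of_isClosed_subset ?_ fun w hw i _ j _ => abs_le.1 (hw.1 i j)
  simp only [weightSphere, Set.ofPred_and, Set.ofPred_forall]
  exact (isClosed_iInter fun i => isClosed_iInter fun j =>
    isClosed_le (by fun_prop) continuous_const).inter (isClosed_eq (by fun_prop) continuous_const)

theorem ne_zero_of_mem_weightSphere (hw : w ∈ weightSphere n) : w ≠ 0 := by
  rintro rfl
  simpa using hw.2

theorem IsStress.exists_smul_mem_weightSphere (hw : IsStress n U q w) (hne : w ≠ 0) :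
    ∃ c : ℝ, c • w ∈ weightSphere n := by
  set S := ∑ i ∈ Finset.range n, ∑ j ∈ Finset.range n, |w i j| with hS
  have hle : ∀ i j, |w i j| ≤ S := fun i j => by
    by_cases h : w i j = 0
    · rw [h, abs_zero]
      positivity
    · obtain ⟨hi, hj, -⟩ := hw.mem_of_ne_zero h
      exact (Finset.single_le_sum (f := fun j => |w i j|) (fun _ _ => abs_nonneg _)
        (Finset.mem_range.2 hj)).trans
          (Finset.single_le_sum (f := fun i => ∑ j ∈ Finset.range n, |w i j|)
            (fun _ _ => by positivity) (Finset.mem_range.2 hi))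
  have hpos : 0 < S := by
    obtain ⟨i, j, hij⟩ : ∃ i j, w i j ≠ 0 := by
      simpa only [Function.ne_iff, Pi.zero_apply] using hne
    exact (abs_pos.2 hij).trans_le (hle i j)
  refine ⟨S⁻¹, fun i j => ?_, ?_⟩
  · rw [Pi.smul_apply, Pi.smul_apply, smul_eq_mul, abs_mul, abs_of_pos (inv_pos.2 hpos),
      inv_mul_le_iff₀ hpos, mul_one]
    exact hle i j
  · simp only [Pi.smul_apply, smul_eq_mul, abs_mul, ← Finset.mul_sum]
    rw [abs_of_pos (inv_pos.2 hpos), ← hS, inv_mul_cancel₀ hpos.ne']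

theorem PositiveStresses.of_weightSphere
    (h : ∀ w ∈ weightSphere n, IsStress n U q w → 0 < pairStress q w e * pairStress q w f) :
    PositiveStresses n U e f q := by
  intro w hw hne
  obtain ⟨c, hmem⟩ := hw.exists_smul_mem_weightSphere hne
  have hpos := h _ hmem (hw.smul c)
  rw [pairStress_smul, pairStress_smul, mul_mul_mul_comm] at hpos
  exact pos_of_mul_pos_right hpos (mul_self_nonneg c)

theorem PositiveStresses.eventually {X : Type*} [TopologicalSpace X] {q : X → ℕ → ℝ × ℝ}
    (hq : Continuous q) {x₀ : X} (h : PositiveStresses n U e f (q x₀)) :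
    ∀ᶠ x in nhds x₀, PositiveStresses n U e f (q x) := by
  suffices hev : ∀ᶠ x in nhds x₀, ∀ w ∈ weightSphere n, IsStress n U (q x) w →
      0 < pairStress (q x) w e * pairStress (q x) w f from hev.mono fun _ => .of_weightSphere
  refine (isCompact_weightSphere n).eventually_forall_of_forall_eventually fun w hw => ?_
  by_cases hs : IsStress n U (q x₀) w
  · have hcont : Continuous fun z : X × (ℕ → ℕ → ℝ) =>
        pairStress (q z.1) z.2 e * pairStress (q z.1) z.2 f := by
      simp only [pairStress, det2]
      fun_prop
    have hpos := h w hs (ne_zero_of_mem_weightSphere hw)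
    exact (continuous_const.continuousAt.eventually_lt hcont.continuousAt hpos).mono
      fun z hz _ => hz
  · have hnhds := (isClosed_isStress hq).isOpen_compl.mem_nhds (x := (x₀, w)) hs
    exact Filter.mem_of_superset hnhds fun z hz hz' => (hz hz').elim

end Stress

/-! ### Contracting an edge -/

/-- The push-forward of the weight `w` on the pairs of the `m`-gon along `π`: the weights of all
pairs with the same image are added up. -/
def push (m : ℕ) (π : ℕ → ℕ) (w : ℕ → ℕ → ℝ) (i j : ℕ) : ℝ :=
  ∑ k ∈ Finset.range m with π k = i, ∑ l ∈ Finset.range m with π l = j, w k l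

/-- The configuration on `n + 1` vertices obtained from a configuration on `n` vertices by
doubling the vector `q 1` and moving the second copy towards `q 2`. -/
def split (q : ℕ → ℝ × ℝ) (ε : ℝ) (j : ℕ) : ℝ × ℝ :=
  if j = 2 then q 1 + ε • q 2 else q (merge j)

section Contract

variable {m n : ℕ} {U U' T T' T₁ T₂ : ℕ → ℕ → Prop} {q : ℕ → ℝ × ℝ} {w : ℕ → ℕ → ℝ}
  {e f : ℕ × ℕ} {π : ℕ → ℕ}

theorem IsStress.mono (hw : IsStress n U q w) (h : U ≤ U') : IsStress n U' q w :=
  ⟨hw.antisymm, fun i j hij => hw.support i j fun h' => hij ⟨h'.1, h'.2.1, h i j h'.2.2⟩,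
    hw.equilibrium⟩

theorem IsStress.push (hw : IsStress m U (q ∘ π) w) (hπ : ∀ k < m, π k < n) :
    IsStress n (Relation.Map U π π) q (push m π w) where
  antisymm i j := by
    simp only [Ngon.push, ← Finset.sum_neg_distrib]
    rw [Finset.sum_comm]
    exact Finset.sum_congr rfl fun _ _ => Finset.sum_congr rfl fun _ _ => hw.antisymm _ _
  support i j hij := by
    refine Finset.sum_eq_zero fun k hk => Finset.sum_eq_zero fun l hl => ?_
    obtain ⟨-, rfl⟩ := Finset.mem_filter.1 hk
    obtain ⟨-, rfl⟩ := Finset.mem_filter.1 hl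
    exact hw.support k l fun hkl => hij ⟨hπ k hkl.1, hπ l hkl.2.1, k, l, hkl.2.2, rfl, rfl⟩
  equilibrium i p₁ p₂ p₃ := by
    simp only [Ngon.push, Finset.sum_mul]
    rw [Finset.sum_comm]
    refine Finset.sum_eq_zero fun k _ => ?_
    rw [← hw.equilibrium k p₁ p₂ p₃, ← Finset.sum_fiberwise_of_maps_to (t := Finset.range n)
      fun l hl => Finset.mem_range.2 (hπ l (Finset.mem_range.1 hl))]
    refine Finset.sum_congr rfl fun j _ => Finset.sum_congr rfl fun l hl => ?_
    rw [Function.comp_apply, (Finset.mem_filter.1 hl).2]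

theorem push_apply_of_unique (he : e.1 < m ∧ e.2 < m)
    (h : ∀ k l, π k = π e.1 → π l = π e.2 → w k l ≠ 0 → k = e.1 ∧ l = e.2) :
    push m π w (π e.1) (π e.2) = w e.1 e.2 := by
  rw [push, Finset.sum_eq_single_of_mem e.1 (by simp [he.1]), Finset.sum_eq_single_of_mem e.2
    (by simp [he.2])]
  · intro l hl hle
    by_contra hw
    exact hle (h _ _ rfl (Finset.mem_filter.1 hl).2 hw).2
  · intro k hk hke
    refine Finset.sum_eq_zero fun l hl => ?_
    by_contra hw
    exact hke (h _ _ (Finset.mem_filter.1 hk).2 (Finset.mem_filter.1 hl).2 hw).1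

theorem push_merge_apply {i j : ℕ} (hi : i < n + 1) (hj : j < n + 1) (hi' : i ≠ 1 ∧ i ≠ 2)
    (hj' : j ≠ 1 ∧ j ≠ 2) : push (n + 1) merge w (merge i) (merge j) = w i j :=
  push_apply_of_unique (e := (i, j)) ⟨hi, hj⟩ fun _ _ hk hl _ =>
    ⟨merge_injective_of_ne hi'.1 hi'.2 hk, merge_injective_of_ne hj'.1 hj'.2 hl⟩

theorem push_merge_one_apply (hn : 2 ≤ n) {j : ℕ} (hj : j < n + 1) (hj' : j ≠ 1 ∧ j ≠ 2) :
    push (n + 1) merge w 1 (merge j) = w 1 j + w 2 j := by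
  have hone : {k ∈ Finset.range (n + 1) | merge k = 1} = {1, 2} := by
    ext k
    simp only [Finset.mem_filter, Finset.mem_range, Finset.mem_insert, Finset.mem_singleton]
    grind [merge]
  have hsingle : {l ∈ Finset.range (n + 1) | merge l = merge j} = {j} := by
    ext l
    simp only [Finset.mem_filter, Finset.mem_range, Finset.mem_singleton]
    exact ⟨fun h => merge_injective_of_ne hj'.1 hj'.2 h.2, by rintro rfl; exact ⟨hj, rfl⟩⟩
  rw [push, hone, hsingle, Finset.sum_pair (by decide), Finset.sum_singleton, Finset.sum_singleton]

theorem IsStress.apply_eq_zero_of_card_eq_four (hw : IsStress n U q w) {i : ℕ} {S : Finset ℕ}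
    (hS : S.card = 4) (hsupp : ∀ k, w i k ≠ 0 → k ∈ S)
    (hdet : ∀ k ∈ S, ∀ l ∈ S, k ≠ l → det2 (q k) (q l) ≠ 0) (j : ℕ) : w i j = 0 := by
  by_contra hij
  have hj := hsupp j hij
  obtain ⟨a, b, c, -, -, -, habc⟩ := Finset.card_eq_three.1
    (by rw [Finset.card_erase_of_mem hj, hS] : (S.erase j).card = 3)
  have hdetj : ∀ k ∈ ({a, b, c} : Finset ℕ), det2 (q k) (q j) ≠ 0 := fun k hk => by
    rw [← habc] at hk
    exact hdet k (Finset.mem_of_mem_erase hk) j hj (Finset.ne_of_mem_erase hk)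
  -- The test form vanishing at `q a`, `q b` and `q c` isolates the neighbour `j`.
  have hsum := hw.equilibrium i (q a) (q b) (q c)
  rw [Finset.sum_eq_single_of_mem j (Finset.mem_range.2 (hw.mem_of_ne_zero hij).2.1)] at hsum
  · exact mul_ne_zero hij (mul_ne_zero (mul_ne_zero (hdetj a (by simp)) (hdetj b (by simp)))
      (hdetj c (by simp))) hsum
  · intro k _ hkj
    by_cases hk : w i k = 0
    · rw [hk, zero_mul]
    · have hk' : k ∈ ({a, b, c} : Finset ℕ) := habc ▸ Finset.mem_erase.2 ⟨hkj, hsupp k hk⟩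
      simp only [Finset.mem_insert, Finset.mem_singleton] at hk'
      rcases hk' with rfl | rfl | rfl <;> simp only [det2_self, mul_zero, zero_mul]

theorem IsStress.apply_one_eq_zero (hw : IsStress (n + 1) U (q ∘ merge) w) (hq : IsCyclic n q)
    {c : ℕ} (hc : 4 ≤ c) (hcn : c < n + 1)
    (hsupp : ∀ k, w 1 k ≠ 0 → k ∈ ({0, 2, 3, c} : Finset ℕ)) (j : ℕ) : w 1 j = 0 := by
  refine hw.apply_eq_zero_of_card_eq_four ?_ hsupp (fun k hk l hl hkl => ?_) j
  · grind
  · simp only [Finset.mem_insert, Finset.mem_singleton] at hk hl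
    refine hq.det2_ne_zero (merge_lt (by omega) (by omega)) (merge_lt (by omega) (by omega)) ?_
    grind [merge]

theorem IsStress.apply_two_eq_neg_apply_one (hw : IsStress (n + 1) U q w) (hn : 2 ≤ n)
    (h : Ngon.push (n + 1) merge w = 0) {j : ℕ} (hj : j ≠ 1 ∧ j ≠ 2) : w 2 j = -w 1 j := by
  by_cases hjn : j < n + 1
  · have hsum := push_merge_one_apply (w := w) hn hjn hj
    rw [h, Pi.zero_apply, Pi.zero_apply] at hsum
    linarith
  · rw [hw.support 2 j (by omega), hw.support 1 j (by omega), neg_zero]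

theorem IsStress.eq_zero_of_push_merge_eq_zero (hw : IsStress (n + 1) U (q ∘ merge) w)
    (hq : IsCyclic n q) {c : ℕ} (hc : 4 ≤ c) (hcn : c < n + 1)
    (hU : ∀ j, 4 ≤ j → j < n + 1 → U 1 j → U 2 j → j = c)
    (h : Ngon.push (n + 1) merge w = 0) : w = 0 := by
  have hone : ∀ j, w 1 j = 0 := by
    refine hw.apply_one_eq_zero hq hc hcn fun k hk => ?_
    have hk1 : k ≠ 1 := by
      rintro rfl
      exact hk (hw.self_eq_zero 1)
    simp only [Finset.mem_insert, Finset.mem_singleton]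
    by_contra hne
    have hk2 : w 2 k ≠ 0 := by
      rw [hw.apply_two_eq_neg_apply_one (by omega) h (by omega)]
      exact neg_ne_zero.2 hk
    obtain ⟨-, hkn, hU1⟩ := hw.mem_of_ne_zero hk
    have := hU k (by omega) hkn hU1 (hw.mem_of_ne_zero hk2).2.2
    omega
  have htwo : ∀ j, w 2 j = 0 := fun j => by
    by_cases hj1 : j = 1
    · rw [hj1, hw.antisymm, hone, neg_zero]
    by_cases hj2 : j = 2
    · rw [hj2, hw.self_eq_zero]
    · rw [hw.apply_two_eq_neg_apply_one (by omega) h ⟨hj1, hj2⟩, hone, neg_zero]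
  ext i j
  by_contra hij
  obtain ⟨hi, hj, -⟩ := hw.mem_of_ne_zero hij
  refine hij ?_
  rw [← push_merge_apply (w := w) hi hj ⟨?_, ?_⟩ ⟨?_, ?_⟩, h]
  · rfl
  all_goals rintro rfl
  · exact hij (hone j)
  · exact hij (htwo j)
  · exact hij (by rw [hw.antisymm, hone, neg_zero]; rfl)
  · exact hij (by rw [hw.antisymm, htwo, neg_zero]; rfl)

theorem IsFlip.mem_left_of_merge_eq (h : IsFlip (n + 1) T₁ T₂ e f)
    (hdiff : IsSoleDiff n (Ngon.contract T₂) (Ngon.contract T₁) (Prod.map merge merge f))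
    {i i' j : ℕ} (hi : i < n + 1) (hi' : i' < n + 1) (hj : j < n + 1) (hmerge : merge i = merge i')
    (hne : i ≠ i') (hij : (T₁ ⊔ T₂) i j) (hij' : (T₁ ⊔ T₂) i' j) : T₁ i j := by
  by_contra hnot
  rcases Sym2.eq_iff.1 ((h.diff_right.mem_or_eq i j hi hj (hij.resolve_left hnot)).resolve_left
    hnot) with ⟨hif, hjf⟩ | ⟨hif, hjf⟩
  · refine hne (hif.trans (h.diff_right.eq_of_merge_eq hdiff hi' hj hij'.symm ?_ ?_).1.symm)
    · rw [← hmerge, hif]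
    · rw [hjf]
  · refine hne (hif.trans (h.diff_right.eq_of_merge_eq hdiff hj hi'
      (hij'.symm.imp (h.right.symm _ _) (h.left.symm _ _)) ?_ ?_).2.symm)
    · rw [hjf]
    · rw [← hmerge, hif]

theorem IsFlip.exists_unique_common_neighbor (h : IsFlip (n + 1) T₁ T₂ e f)
    (hdiff : IsSoleDiff n (Ngon.contract T₂) (Ngon.contract T₁) (Prod.map merge merge f))
    (hn : 5 ≤ n) (hear : T₁ 0 3) : ∃ c, 4 ≤ c ∧ c < n + 1 ∧
      ∀ j, 4 ≤ j → j < n + 1 → (T₁ ⊔ T₂) 1 j → (T₁ ⊔ T₂) 2 j → j = c := by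
  obtain ⟨c, hc, hcn, hc1, hc2⟩ := h.left.exists_common_neighbor (by omega)
  refine ⟨c, hc, hcn, fun j hj hjn hj1 hj2 => le_antisymm ?_ ?_⟩
  · exact h.left.le_of_ear hear hc hjn hc1 (h.mem_left_of_merge_eq hdiff (i := 2) (i' := 1)
      (by omega) (by omega) hjn rfl (by omega) hj2 hj1)
  · exact h.left.le_of_ear hear hj hcn (h.mem_left_of_merge_eq hdiff (i := 1) (i' := 2)
      (by omega) (by omega) hjn rfl (by omega) hj1 hj2) hc2

theorem IsSoleDiff.pairStress_push_merge (h : IsSoleDiff (n + 1) T T' e)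
    (h' : IsSoleDiff n (Ngon.contract T) (Ngon.contract T') (Prod.map merge merge e))
    (hw : IsStress (n + 1) U (q ∘ merge) w) (hU : U ≤ T ⊔ T') :
    pairStress q (push (n + 1) merge w) (Prod.map merge merge e) =
      pairStress (q ∘ merge) w e := by
  rw [pairStress, Prod.map_fst, Prod.map_snd, push_apply_of_unique ⟨h.fst_lt, h.snd_lt⟩]
  · rfl
  · intro k l hk hl hkl
    obtain ⟨hkn, hln, hUkl⟩ := hw.mem_of_ne_zero hkl
    exact h.eq_of_merge_eq h' hkn hln (hU k l hUkl) hk hl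

theorem IsFlip.positiveStresses_comp_merge (h : IsFlip (n + 1) T₁ T₂ e f)
    (h' : IsFlip n (Ngon.contract T₁) (Ngon.contract T₂) (Prod.map merge merge e)
      (Prod.map merge merge f)) (hn : 5 ≤ n) (hear : T₁ 0 3) (hq : IsCyclic n q)
    (hpos : PositiveStresses n (Ngon.contract T₁ ⊔ Ngon.contract T₂) (Prod.map merge merge e)
      (Prod.map merge merge f) q) :
    PositiveStresses (n + 1) (T₁ ⊔ T₂) e f (q ∘ merge) := by
  intro w hw hne
  obtain ⟨c, hc, hcn, hunique⟩ := h.exists_unique_common_neighbor h'.diff_right hn hear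
  have hpush : IsStress n (Ngon.contract T₁ ⊔ Ngon.contract T₂) q (push (n + 1) merge w) := by
    refine (hw.push (n := n) fun k hk => merge_lt (by omega) hk).mono ?_
    rintro _ _ ⟨i, j, hij, rfl, rfl⟩
    exact hij.imp contract_merge contract_merge
  rw [← h.diff_left.pairStress_push_merge h'.diff_left hw le_rfl,
    ← h.diff_right.pairStress_push_merge h'.diff_right hw (sup_comm T₁ T₂).le]
  exact hpos _ hpush fun h0 => hne (hw.eq_zero_of_push_merge_eq_zero hq hc hcn hunique h0)

theorem IsCyclic.split (hq : IsCyclic n q) (hn : 3 ≤ n) {ε : ℝ} (hε : 0 < ε) :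
    IsCyclic (n + 1) (split q ε) := by
  intro i j hij hj
  have hmerge : ¬(i = 1 ∧ j = 2) → 0 < det2 (q (merge i)) (q (merge j)) := fun hne =>
    hq _ _ (merge_lt_merge hij hne) (merge_lt (by omega) hj)
  by_cases hj2 : j = 2
  · subst hj2
    have h2 : 0 < det2 (q (merge i)) (q 2) := hq _ _ (by grind [merge]) (by omega)
    rw [Ngon.split, Ngon.split, if_neg hij.ne, if_pos rfl, det2_add_right, det2_smul_right]
    by_cases hi1 : i = 1
    · subst hi1
      rw [show merge 1 = 1 from rfl, det2_self, zero_add]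
      exact mul_pos hε h2
    · exact add_pos (hmerge (by omega)) (mul_pos hε h2)
  · by_cases hi2 : i = 2
    · subst hi2
      have h2 : 0 ≤ det2 (q 2) (q (merge j)) := by
        by_cases hj3 : j = 3
        · rw [hj3, show merge 3 = 2 from rfl, det2_self]
        · exact (hq _ _ (by grind [merge]) (merge_lt (by omega) hj)).le
      rw [Ngon.split, Ngon.split, if_pos rfl, if_neg hj2, det2_add_left, det2_smul_left]
      exact add_pos_of_pos_of_nonneg (hmerge (by omega)) (mul_nonneg hε.le h2)
    · rw [Ngon.split, Ngon.split, if_neg hi2, if_neg hj2]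
      exact hmerge (by omega)

theorem split_zero : split q 0 = q ∘ merge := by
  ext1 j
  by_cases hj : j = 2
  · simp [split, hj, merge]
  · simp [split, hj]

theorem continuous_split : Continuous (split q) :=
  continuous_pi fun j => by
    unfold split
    split_ifs <;> fun_prop

theorem IsFlip.isRealizable_of_contract (h : IsFlip (n + 1) T₁ T₂ e f)
    (h' : IsFlip n (Ngon.contract T₁) (Ngon.contract T₂) (Prod.map merge merge e)
      (Prod.map merge merge f)) (hn : 5 ≤ n) (hear : T₁ 0 3)
    (hreal : IsRealizable n (Ngon.contract T₁) (Ngon.contract T₂) (Prod.map merge merge e)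
      (Prod.map merge merge f)) : IsRealizable (n + 1) T₁ T₂ e f := by
  obtain ⟨q, hq, hpos⟩ := hreal
  have hmerge := h.positiveStresses_comp_merge h' hn hear hq hpos
  rw [← split_zero] at hmerge
  obtain ⟨ε, hεpos, hε⟩ := (((hmerge.eventually continuous_split).filter_mono
    nhdsWithin_le_nhds).and (self_mem_nhdsWithin (s := Set.Ioi 0))).exists
  exact ⟨split q ε, hq.split (by omega) hε, hεpos⟩

end Contract

/-! ### The hexagon -/

/-- The product of the determinants of `q j` with the other vectors of a configuration of six. The
stresses of the complete graph on the hexagon are the multiples of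
`det2 (q i) (q j) / (sixProd q i * sixProd q j)`. -/
def sixProd (q : ℕ → ℝ × ℝ) (j : ℕ) : ℝ := ∏ k ∈ (Finset.range 6).erase j, det2 (q k) (q j)

section Hexagon

variable {U T T' T₁ T₂ : ℕ → ℕ → Prop} {q : ℕ → ℝ × ℝ} {w : ℕ → ℕ → ℝ} {e f : ℕ × ℕ} {i j k : ℕ}

theorem IsCyclic.sixProd_ne_zero (hq : IsCyclic 6 q) (hj : j < 6) : sixProd q j ≠ 0 :=
  Finset.prod_ne_zero_iff.2 fun _ hk =>
    hq.det2_ne_zero (Finset.mem_range.1 (Finset.mem_of_mem_erase hk)) hj (Finset.ne_of_mem_erase hk)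

theorem sixProd_eq (hi : i < 6) (hk : k < 6) (hij : i ≠ j) (hik : i ≠ k) (hjk : j ≠ k) :
    sixProd q j = det2 (q i) (q j) * (det2 (q k) (q j) *
      ∏ a ∈ (((Finset.range 6).erase j).erase i).erase k, det2 (q a) (q j)) := by
  rw [sixProd, Finset.mul_prod_erase _ fun a => det2 (q a) (q j),
    Finset.mul_prod_erase _ fun a => det2 (q a) (q j)]
  · simp [hi, hij]
  · simp [hk, hik.symm, hjk.symm]

theorem IsStress.mul_sixProd_mul_det2_eq (hw : IsStress 6 U q w) (hi : i < 6) (hj : j < 6)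
    (hk : k < 6) (hij : i ≠ j) (hik : i ≠ k) (hjk : j ≠ k) :
    w i j * sixProd q j * det2 (q i) (q k) = w i k * sixProd q k * det2 (q i) (q j) := by
  set S : Finset ℕ := (((Finset.range 6).erase i).erase j).erase k
  have hcard : S.card = 3 := by grind
  obtain ⟨a, b, c, hab, hac, hbc, habc⟩ := Finset.card_eq_three.1 hcard
  have hprod : ∀ l, ∏ m ∈ S, det2 (q m) (q l) =
      det2 (q a) (q l) * det2 (q b) (q l) * det2 (q c) (q l) := fun l => by
    rw [habc, Finset.prod_insert (by simp [hab, hac]), Finset.prod_pair hbc, mul_assoc]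
  have hrow : w i j * ∏ m ∈ S, det2 (q m) (q j) + w i k * ∏ m ∈ S, det2 (q m) (q k) = 0 := by
    have hsum := hw.equilibrium i (q a) (q b) (q c)
    simp only [← hprod] at hsum
    rwa [Finset.sum_eq_add_of_mem j k (by simpa) (by simpa) hjk] at hsum
    intro l hl hne
    by_cases hli : l = i
    · rw [hli, hw.self_eq_zero, zero_mul]
    · have hlS : l ∈ S := by grind
      rw [Finset.prod_eq_zero hlS (det2_self _), mul_zero]
  have hSj : (((Finset.range 6).erase j).erase i).erase k = S := by grind
  have hSk : (((Finset.range 6).erase k).erase i).erase j = S := by grind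
  rw [sixProd_eq hi hk hij hik hjk, sixProd_eq hi hj hik hij hjk.symm, hSj, hSk,
    det2_swap (q j) (q k)]
  linear_combination -det2 (q i) (q j) * det2 (q j) (q k) * det2 (q i) (q k) * hrow

theorem IsStress.exists_mul_sixProd_eq (hw : IsStress 6 U q w) (hq : IsCyclic 6 q) :
    ∃ κ : ℝ, ∀ i j, i < 6 → j < 6 → i ≠ j →
      w i j * (sixProd q i * sixProd q j) = κ * det2 (q i) (q j) := by
  let W : ℕ → ℕ → ℝ := fun i j => w i j * (sixProd q i * sixProd q j) / det2 (q i) (q j)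
  have hsymm : ∀ i j, W i j = W j i := fun i j => by
    simp only [W]
    rw [hw.antisymm i j, det2_swap (q j) (q i), mul_comm (sixProd q i), neg_mul, neg_div_neg_eq]
  have hrow : ∀ i j k, i < 6 → j < 6 → k < 6 → i ≠ j → i ≠ k → W i j = W i k := by
    intro i j k hi hj hk hij hik
    obtain rfl | hjk := eq_or_ne j k
    · rfl
    simp only [W]
    rw [div_eq_div_iff (hq.det2_ne_zero hi hj hij) (hq.det2_ne_zero hi hk hik)]
    linear_combination sixProd q i * hw.mul_sixProd_mul_det2_eq hi hj hk hij hik hjk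
  refine ⟨W 0 1, fun i j hi hj hij => ?_⟩
  suffices hW : W i j = W 0 1 by
    rw [← hW, div_mul_cancel₀ _ (hq.det2_ne_zero hi hj hij)]
  obtain rfl | hi0 := eq_or_ne i 0
  · exact hrow 0 j 1 hi hj (by norm_num) hij (by norm_num)
  · rw [hrow i j 0 hi hj (by norm_num) hij hi0, hsymm,
      hrow 0 i 1 (by norm_num) hi (by norm_num) hi0.symm (by norm_num)]

theorem isCyclic_one_natCast (n : ℕ) : IsCyclic n fun i => (1, (i : ℝ)) := fun i j hij _ => by
  have : (i : ℝ) < j := by exact_mod_cast hij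
  simpa [det2] using this

theorem sixProd_one_natCast_mul_neg (hi : i < 3) :
    sixProd (fun i => (1, (i : ℝ))) i * sixProd (fun i => (1, (i : ℝ))) (i + 3) < 0 := by
  have hrange : Finset.range 6 = {0, 1, 2, 3, 4, 5} := rfl
  interval_cases i <;>
    norm_num [sixProd, hrange, det2, Finset.erase_insert_eq_erase, Finset.erase_insert_of_ne]

theorem IsSoleDiff.sixProd_one_natCast_mul_neg (h : IsSoleDiff 6 T T' e)
    (hT' : IsTwoTriangulation 6 T') :
    sixProd (fun i => (1, (i : ℝ))) e.1 * sixProd (fun i => (1, (i : ℝ))) e.2 < 0 := by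
  have of_lt : ∀ i j, i < j → j < 6 → ¬T' i j →
      sixProd (fun i => (1, (i : ℝ))) i * sixProd (fun i => (1, (i : ℝ))) j < 0 := by
    intro i j hij hj hmem
    have hlong := mt (hT'.mem_of_short hij hj) hmem
    obtain rfl : j = i + 3 := by omega
    exact Ngon.sixProd_one_natCast_mul_neg (by omega)
  rcases lt_or_gt_of_ne h.ne with hlt | hgt
  · exact of_lt _ _ hlt h.snd_lt h.notMem
  · rw [mul_comm]
    exact of_lt _ _ hgt h.fst_lt fun hmem => h.notMem (hT'.symm _ _ hmem)

theorem IsFlip.isRealizable_six (h : IsFlip 6 T₁ T₂ e f) : IsRealizable 6 T₁ T₂ e f := by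
  refine ⟨_, isCyclic_one_natCast 6, fun w hw hw0 => ?_⟩
  obtain ⟨κ, hκ⟩ := hw.exists_mul_sixProd_eq (isCyclic_one_natCast 6)
  set q : ℕ → ℝ × ℝ := fun i => (1, (i : ℝ))
  have hq : IsCyclic 6 q := isCyclic_one_natCast 6
  have hκ0 : κ ≠ 0 := by
    rintro rfl
    refine hw0 (funext₂ fun i j => by_contra fun hij => ?_)
    obtain ⟨hi, hj, -⟩ := hw.mem_of_ne_zero hij
    have hne : i ≠ j := fun heq => hij (heq ▸ hw.self_eq_zero i)
    refine mul_ne_zero hij (mul_ne_zero (hq.sixProd_ne_zero hi) (hq.sixProd_ne_zero hj)) ?_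
    rw [hκ i j hi hj hne, zero_mul]
  have hsign : ∀ {T T' : ℕ → ℕ → Prop} {e : ℕ × ℕ}, IsSoleDiff 6 T T' e →
      IsTwoTriangulation 6 T' → κ * pairStress q w e < 0 := fun {T T' e} he hT' => by
    have hdet := hq.det2_ne_zero he.fst_lt he.snd_lt he.ne
    have heq : κ * pairStress q w e * (sixProd q e.1 * sixProd q e.2) =
        (κ * det2 (q e.1) (q e.2)) ^ 2 := by
      rw [pairStress]
      linear_combination κ * det2 (q e.1) (q e.2) * hκ e.1 e.2 he.fst_lt he.snd_lt he.ne
    have hpos : 0 < κ * pairStress q w e * (sixProd q e.1 * sixProd q e.2) := by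
      rw [heq]
      positivity
    exact neg_of_mul_pos_left hpos (he.sixProd_one_natCast_mul_neg hT').le
  have hmul := mul_pos_of_neg_of_neg (hsign h.diff_left h.right) (hsign h.diff_right h.left)
  rw [mul_mul_mul_comm] at hmul
  exact pos_of_mul_pos_right hmul (mul_self_nonneg κ)

end Hexagon

/-! ### Realizability of all flips -/

section Realizable

variable {n : ℕ} {T₁ T₂ : ℕ → ℕ → Prop} {e f : ℕ × ℕ}

theorem IsFlip.isRealizable_of_rotate (h : IsFlip n T₁ T₂ e f)
    (hreal : IsRealizable n (Ngon.rotate n T₁) (Ngon.rotate n T₂) (Prod.map (prev n) (prev n) e)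
      (Prod.map (prev n) (prev n) f)) : IsRealizable n T₁ T₂ e f :=
  .of_rotate ⟨h.diff_left.fst_lt, h.diff_left.snd_lt⟩ ⟨h.diff_right.fst_lt, h.diff_right.snd_lt⟩
    hreal

theorem IsFlip.isRealizable_of_ear (hn : 5 ≤ n)
    (ih : ∀ {T₁ T₂ e f}, IsFlip n T₁ T₂ e f → IsRealizable n T₁ T₂ e f)
    (h : IsFlip (n + 1) T₁ T₂ e f) {s : ℕ} (hs : s + 3 < n + 1)
    (hear₁ : T₁ s (s + 3)) (hear₂ : T₂ s (s + 3)) (he₁ : e.1 ≠ s + 1 ∧ e.1 ≠ s + 2)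
    (he₂ : e.2 ≠ s + 1 ∧ e.2 ≠ s + 2) : IsRealizable (n + 1) T₁ T₂ e f := by
  induction s generalizing T₁ T₂ e f with
  | zero =>
    have hcontract := h.contract hn hear₁ hear₂ he₁ he₂
    exact h.isRealizable_of_contract hcontract hn hear₁ (ih hcontract)
  | succ s ihs =>
    have hprev : ∀ i, i ≠ s + 1 + 1 ∧ i ≠ s + 1 + 2 →
        prev (n + 1) i ≠ s + 1 ∧ prev (n + 1) i ≠ s + 2 := fun i hi => by
      rw [prev]
      split_ifs <;> omega
    exact h.isRealizable_of_rotate <| ihs h.rotate (by omega)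
      (rotate_pred (by omega) (by omega) hs hear₁) (rotate_pred (by omega) (by omega) hs hear₂)
      (hprev _ he₁) (hprev _ he₂)

theorem IsFlip.isRealizable_of_add_four_le (hn : 5 ≤ n)
    (ih : ∀ {T₁ T₂ e f}, IsFlip n T₁ T₂ e f → IsRealizable n T₁ T₂ e f)
    (h : IsFlip (n + 1) T₁ T₂ e f) (he : e.1 + 4 ≤ e.2) : IsRealizable (n + 1) T₁ T₂ e f := by
  have he2 := h.diff_left.snd_lt
  obtain ⟨s, hs, hs3, hear⟩ := h.left.exists_ear_le (by omega) he2 h.diff_left.mem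
  have hear₂ : T₂ s (s + 3) :=
    (h.diff_left.mem_or_eq _ _ (by omega) (by omega) hear).resolve_right fun heq => by
      rcases Sym2.eq_iff.1 heq with h' | h' <;> omega
  exact h.isRealizable_of_ear hn ih (by omega) hear hear₂ (by omega) (by omega)

theorem IsFlip.isRealizable_of_lt (hn : 6 ≤ n)
    (ih : ∀ {T₁ T₂ e f}, IsFlip n T₁ T₂ e f → IsRealizable n T₁ T₂ e f)
    (h : IsFlip (n + 1) T₁ T₂ e f) (hlt : e.1 < e.2) : IsRealizable (n + 1) T₁ T₂ e f := by
  induction hk : e.1 generalizing T₁ T₂ e f with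
  | zero =>
    by_cases hlong : e.1 + 4 ≤ e.2
    · exact h.isRealizable_of_add_four_le (by omega) ih hlong
    · refine h.isRealizable_of_rotate (.of_swap_left ?_)
      refine h.rotate.swap_left.isRealizable_of_add_four_le (by omega) ih ?_
      have he2 : e.2 ≠ 0 := by omega
      simp only [Prod.fst_swap, Prod.snd_swap, Prod.map_fst, Prod.map_snd, prev, hk, he2, if_true,
        if_false]
      omega
  | succ k ihk =>
    have he1 : prev (n + 1) e.1 = k := by simp [prev, hk]
    have he2 : prev (n + 1) e.2 = e.2 - 1 := if_neg (by omega)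
    refine h.isRealizable_of_rotate (ihk h.rotate ?_ he1)
    rw [Prod.map_fst, Prod.map_snd, he1, he2]
    omega

end Realizable

theorem IsFlip.isRealizable {n : ℕ} (hn : 6 ≤ n) {T₁ T₂ : ℕ → ℕ → Prop} {e f : ℕ × ℕ}
    (h : IsFlip n T₁ T₂ e f) : IsRealizable n T₁ T₂ e f := by
  induction n, hn using Nat.le_induction generalizing T₁ T₂ e f with
  | base => exact h.isRealizable_six
  | succ n hn ih =>
    rcases lt_or_gt_of_ne h.diff_left.ne with hlt | hgt
    · exact h.isRealizable_of_lt hn ih hlt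
    · exact .of_swap_left (h.swap_left.isRealizable_of_lt hn ih hgt)

/-! ### Normalization to points on the line -/

section Normalization

variable {n : ℕ} {U T₁ T₂ : ℕ → ℕ → Prop} {q : ℕ → ℝ × ℝ} {w : ℕ → ℕ → ℝ} {e f : ℕ × ℕ}
  {L : ℝ × ℝ → ℝ × ℝ} {D : ℝ}

theorem det2_det2_det2 (u v x y : ℝ × ℝ) :
    det2 (det2 u x, det2 v x) (det2 u y, det2 v y) = det2 u v * det2 x y := by
  simp only [det2]
  ring

theorem IsStress.of_comp (hL : ∀ x y, det2 (L x) (L y) = D * det2 x y) (hD : D ≠ 0)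
    (hw : IsStress n U (L ∘ q) w) : IsStress n U q w where
  antisymm := hw.antisymm
  support := hw.support
  equilibrium i p₁ p₂ p₃ := by
    refine (mul_eq_zero.1 ?_).resolve_left (pow_ne_zero 3 hD)
    rw [← hw.equilibrium i (L p₁) (L p₂) (L p₃), Finset.mul_sum]
    refine Finset.sum_congr rfl fun j _ => ?_
    simp only [Function.comp_apply, hL]
    ring

theorem PositiveStresses.comp (h : PositiveStresses n U e f q)
    (hL : ∀ x y, det2 (L x) (L y) = D * det2 x y) (hD : D ≠ 0) :
    PositiveStresses n U e f (L ∘ q) := by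
  intro w hw hne
  have hpair : ∀ g, pairStress (L ∘ q) w g = D * pairStress q w g := fun g => by
    rw [pairStress, pairStress, Function.comp_apply, Function.comp_apply, hL, mul_left_comm]
  rw [hpair, hpair, mul_mul_mul_comm]
  exact mul_pos (mul_self_pos.2 hD) (h w (hw.of_comp hL hD) hne)

theorem IsCyclic.det2_sub_last_pos (hq : IsCyclic n q) (hn : 2 ≤ n) {i : ℕ} (hi : i < n) :
    0 < det2 (q 0 - q (n - 1)) (q i) := by
  have hsub : det2 (q 0 - q (n - 1)) (q i) = det2 (q 0) (q i) + det2 (q i) (q (n - 1)) := by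
    simp only [det2, Prod.fst_sub, Prod.snd_sub]
    ring
  rw [hsub]
  obtain rfl | hi0 := Nat.eq_zero_or_pos i
  · rw [det2_self, zero_add]
    exact hq _ _ (by omega) (by omega)
  · refine add_pos_of_pos_of_nonneg (hq _ _ hi0 hi) ?_
    obtain rfl | hlast := eq_or_ne i (n - 1)
    · rw [det2_self]
    · exact (hq _ _ (by omega) (by omega)).le

theorem PositiveStresses.of_fst_ne_zero (h : PositiveStresses n U e f q)
    (hq : ∀ i < n, (q i).1 ≠ 0) (he : e.1 < n ∧ e.2 < n) (hf : f.1 < n ∧ f.2 < n) :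
    PositiveStresses n U e f fun i => (1, (q i).2 / (q i).1) := by
  refine h.of_reindex (π := id) (c := fun i => ((q i).1)⁻¹) (Set.bijOn_id _) (fun _ => id)
    (fun i hi => inv_ne_zero (hq i hi)) (fun i hi => ?_) (fun _ _ => id) he hf
  ext
  · simp [hq i hi]
  · simp [div_eq_inv_mul]

theorem IsRealizable.exists_strictMonoOn (h : IsRealizable n T₁ T₂ e f) (hn : 2 ≤ n)
    (he : e.1 < n ∧ e.2 < n) (hf : f.1 < n ∧ f.2 < n) :
    ∃ t : ℕ → ℝ, StrictMonoOn t (Set.Iio n) ∧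
      PositiveStresses n (T₁ ⊔ T₂) e f fun i => (1, t i) := by
  obtain ⟨q, hq, hpos⟩ := h
  let u := q 0 - q (n - 1)
  let L : ℝ × ℝ → ℝ × ℝ := fun x => (det2 u x, det2 (q 0) x)
  have hL : ∀ x y, det2 (L x) (L y) = det2 u (q 0) * det2 x y := det2_det2_det2 _ _
  have hu : ∀ i < n, 0 < det2 u (q i) := fun i hi => hq.det2_sub_last_pos hn hi
  have hD : 0 < det2 u (q 0) := hu 0 (by omega)
  refine ⟨fun i => det2 (q 0) (q i) / det2 u (q i), fun i hi j hj hij => ?_,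
    (hpos.comp hL hD.ne').of_fst_ne_zero (fun i hi => (hu i hi).ne') he hf⟩
  have hLij : 0 < det2 (L (q i)) (L (q j)) := hL (q i) (q j) ▸ mul_pos hD (hq i j hij hj)
  have hdet : det2 (L (q i)) (L (q j)) =
      det2 u (q i) * det2 (q 0) (q j) - det2 (q 0) (q i) * det2 u (q j) := rfl
  rw [div_lt_div_iff₀ (hu i hi) (hu j hj)]
  linarith

end Normalization

/-! ### Sets of pairs -/

/-- The symmetric relation on `ℕ` whose pairs are the elements of `T`. -/
def pairRel {n : ℕ} (T : Set (Pair n)) (i j : ℕ) : Prop :=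
  ∃ g ∈ T, s((g.1.1 : ℕ), (g.1.2 : ℕ)) = s(i, j)

section PairRel

variable {n : ℕ} {T T' T₁ T₂ : Set (Pair n)} {g x y e f : Pair n}

theorem pairRel_symm {i j : ℕ} (h : pairRel T i j) : pairRel T j i :=
  let ⟨g, hg, heq⟩ := h
  ⟨g, hg, heq.trans Sym2.eq_swap⟩

theorem exists_of_pairRel_of_lt {i j : ℕ} (h : pairRel T i j) (hij : i < j) :
    ∃ g ∈ T, (g.1.1 : ℕ) = i ∧ (g.1.2 : ℕ) = j := by
  obtain ⟨g, hg, heq⟩ := h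
  have : (g.1.1 : ℕ) < g.1.2 := g.2
  exact ⟨g, hg, (Sym2.eq_iff.1 heq).resolve_right (by omega)⟩

theorem pairRel_coe : pairRel T g.1.1 g.1.2 ↔ g ∈ T := by
  refine ⟨fun h => ?_, fun h => ⟨g, h, rfl⟩⟩
  obtain ⟨g', hg', h₁, h₂⟩ := exists_of_pairRel_of_lt h g.2
  rwa [← Subtype.ext (Prod.ext (Fin.ext h₁) (Fin.ext h₂))]

theorem exists_cross_of_notMem {k : ℕ} (h : IsTriangulation n k T) (hg : g ∉ T) :
    ∃ C : Finset (Pair n), ↑C ⊆ T ∧ C.card = k ∧ (∀ x ∈ C, Cross g x) ∧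
      ∀ x ∈ C, ∀ y ∈ C, x ≠ y → Cross x y := by
  classical
  have hinsert : ¬CrossingFree n k (insert g T) := fun hfree =>
    hg (h.2 _ hfree (Set.subset_insert g T) ▸ Set.mem_insert g T)
  obtain ⟨C, hCT, hcard, hcross⟩ := not_not.1 hinsert
  have hgC : g ∈ C := by
    by_contra hgC
    exact h.1 ⟨C, (Set.subset_insert_iff_of_notMem (mt Finset.mem_coe.1 hgC)).1 hCT, hcard, hcross⟩
  refine ⟨C.erase g, ?_, by rw [Finset.card_erase_of_mem hgC, hcard, Nat.add_sub_cancel],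
    fun x hx => hcross _ hgC _ (Finset.mem_of_mem_erase hx) (Finset.ne_of_mem_erase hx).symm,
    fun x hx y hy => hcross _ (Finset.mem_of_mem_erase hx) _ (Finset.mem_of_mem_erase hy)⟩
  rw [Finset.coe_erase]
  exact Set.sdiff_singleton_subset_iff.2 hCT

theorem obstructed_of_cross (hx : x ∈ T) (hy : y ∈ T) (hgx : Cross g x) (hgy : Cross g y)
    (hxy : Cross x y) : Obstructed n (pairRel T) g.1.1 g.1.2 := by
  wlog hlt : x.1.1 < y.1.1 generalizing x y
  · exact this hy hx hgy hgx hxy.symm (hxy.resolve_left fun h => hlt h.1).1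
  have hyn := y.1.2.2
  have hrelx := pairRel_coe.2 hx
  have hrely := pairRel_coe.2 hy
  simp only [Cross, Fin.lt_def] at hgx hgy hxy hlt
  rcases hgx with hgx | hgx <;> rcases hgy with hgy | hgy
  · exact .inl ⟨_, _, _, _, by omega, by omega, by omega, by omega, by omega, hyn, hrelx, hrely⟩
  · omega
  · exact .inr (.inl ⟨_, _, _, _, by omega, by omega, by omega, by omega, by omega, hyn, hrelx,
      hrely⟩)
  · exact .inr (.inr ⟨_, _, _, _, by omega, by omega, by omega, by omega, by omega, hrelx, hrely⟩)

theorem not_pairRel_of_crossingFree (h : CrossingFree n 2 T) {a b c d e f : ℕ} (hab : a < b)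
    (hbc : b < c) (hcd : c < d) (hde : d < e) (hef : e < f) (had : pairRel T a d)
    (hbe : pairRel T b e) : ¬pairRel T c f := by
  classical
  intro hcf
  obtain ⟨x, hx, rfl, rfl⟩ := exists_of_pairRel_of_lt had (by omega)
  obtain ⟨y, hy, rfl, rfl⟩ := exists_of_pairRel_of_lt hbe (by omega)
  obtain ⟨z, hz, rfl, rfl⟩ := exists_of_pairRel_of_lt hcf (by omega)
  have hxy : Cross x y := .inl ⟨hab, hbc.trans hcd, hde⟩
  have hxz : Cross x z := .inl ⟨hab.trans hbc, hcd, hde.trans hef⟩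
  have hyz : Cross y z := .inl ⟨hbc, hcd.trans hde, hef⟩
  refine h ⟨{x, y, z}, by simp [Set.insert_subset_iff, hx, hy, hz],
    Finset.card_eq_three.2 ⟨x, y, z, ?_, ?_, ?_, rfl⟩, ?_⟩
  · rintro rfl
    exact hab.false
  · rintro rfl
    exact (hab.trans hbc).false
  · rintro rfl
    exact hbc.false
  · simp only [Finset.mem_insert, Finset.mem_singleton]
    rintro _ (rfl | rfl | rfl) _ (rfl | rfl | rfl) hne <;>
      first | exact (hne rfl).elim | assumption | exact Or.symm ‹_›

theorem isTwoTriangulation_pairRel (h : IsTriangulation n 2 T) :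
    IsTwoTriangulation n (pairRel T) where
  symm _ _ := pairRel_symm
  not_crossing _ _ _ _ _ _ hab hbc hcd hde hef _ :=
    not_pairRel_of_crossingFree h.1 hab hbc hcd hde hef
  obstructed i j hij hj hnot := by
    obtain ⟨C, hCT, hcard, hgC, hC⟩ := exists_cross_of_notMem h
      (g := ⟨(⟨i, hij.trans hj⟩, ⟨j, hj⟩), hij⟩) (mt pairRel_coe.2 hnot)
    obtain ⟨x, y, hne, rfl⟩ := Finset.card_eq_two.1 hcard
    have hx : x ∈ ({x, y} : Finset (Pair n)) := by simp
    have hy : y ∈ ({x, y} : Finset (Pair n)) := by simp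
    exact obstructed_of_cross (hCT hx) (hCT hy) (hgC x hx) (hgC y hy) (hC x hx y hy hne)

theorem isSoleDiff_pairRel (h : T \ T' = {e}) :
    IsSoleDiff n (pairRel T) (pairRel T') ((e.1.1 : ℕ), (e.1.2 : ℕ)) where
  fst_lt := e.1.1.2
  snd_lt := e.1.2.2
  ne := e.2.ne ∘ Fin.ext
  mem := pairRel_coe.2 (h ▸ Set.mem_singleton e : e ∈ T \ T').1
  notMem := mt pairRel_coe.1 (h ▸ Set.mem_singleton e : e ∈ T \ T').2
  mem_or_eq i j _ _ hij := by
    obtain ⟨g, hg, heq⟩ := hij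
    by_cases hg' : g ∈ T'
    · exact .inl ⟨g, hg', heq⟩
    · obtain rfl : g = e := h.subset ⟨hg, hg'⟩
      exact .inr heq.symm

theorem isFlip_pairRel (h₁ : IsTriangulation n 2 T₁) (h₂ : IsTriangulation n 2 T₂)
    (he : T₁ \ T₂ = {e}) (hf : T₂ \ T₁ = {f}) :
    IsFlip n (pairRel T₁) (pairRel T₂) ((e.1.1 : ℕ), (e.1.2 : ℕ)) ((f.1.1 : ℕ), (f.1.2 : ℕ)) :=
  ⟨isTwoTriangulation_pairRel h₁, isTwoTriangulation_pairRel h₂, isSoleDiff_pairRel he,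
    isSoleDiff_pairRel hf⟩

theorem card_edges_pairRel (T : Set (Pair n)) : (edges n (pairRel T)).card = T.ncard := by
  rw [← Set.ncard_coe_finset]
  symm
  refine Set.ncard_congr (fun g _ => ((g.1.1 : ℕ), (g.1.2 : ℕ))) (fun g hg => ?_)
    (fun g g' _ _ heq => ?_) (fun p hp => ?_)
  · exact mem_edges.2 ⟨g.2, g.1.2.2, pairRel_coe.2 hg⟩
  · exact Subtype.ext (Prod.ext (Fin.ext (congrArg Prod.fst heq))
      (Fin.ext (congrArg Prod.snd heq)))
  · obtain ⟨hlt, -, hrel⟩ := mem_edges.1 hp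
    obtain ⟨g, hg, h₁, h₂⟩ := exists_of_pairRel_of_lt hrel hlt
    exact ⟨g, hg, Prod.ext h₁ h₂⟩

theorem four_mul_lt_ncard_union_add_ten (hn : 5 ≤ n) (h₁ : IsTriangulation n 2 T₁)
    (hf : f ∈ T₂ \ T₁) : 4 * n < (T₁ ∪ T₂).ncard + 10 := by
  have hcard := (isTwoTriangulation_pairRel h₁).four_mul_le_card_edges_add_ten hn
  rw [card_edges_pairRel] at hcard
  have hlt : T₁.ncard < (T₁ ∪ T₂).ncard :=
    Set.ncard_lt_ncard (Set.ssubset_iff_subset_ne.2 ⟨Set.subset_union_left,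
      fun heq => hf.2 (heq ▸ .inr hf.1)⟩)
  omega

end PairRel

/-! ### Dependences of the bar-and-joint rigidity matrix -/

theorem linearIndepOn_iff_forall_fun {ι R M : Type*} [Fintype ι] [Ring R] [AddCommGroup M]
    [Module R M] {v : ι → M} {s : Set ι} :
    LinearIndepOn R v s ↔
      ∀ c : ι → R, (∀ i, c i ≠ 0 → i ∈ s) → ∑ i, c i • v i = 0 → c = 0 := by
  rw [linearIndepOn_iff]
  refine ⟨fun h c hc hsum => ?_, fun h l hl hsum => ?_⟩
  · rw [← Finsupp.coe_equivFunOnFinite_symm c, h (Finsupp.equivFunOnFinite.symm c)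
      (fun i hi => hc i (by simpa using hi))
      (by rwa [Finsupp.linearCombination_apply,
        Finsupp.sum_fintype _ _ fun i => zero_smul R (v i)]), Finsupp.coe_zero]
  · refine DFunLike.coe_injective (h l (fun i hi => hl (Finsupp.mem_support_iff.2 hi)) ?_)
    rwa [Finsupp.linearCombination_apply, Finsupp.sum_fintype _ _ fun i => zero_smul R (v i)]
      at hsum

theorem linearIndepOn_of_mul_pos {ι R M : Type*} [Fintype ι] [Ring R] [Preorder R]
    [AddCommGroup M] [Module R M] {v : ι → M} {s U : Set ι} {e f : ι} (hsU : s ⊆ U)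
    (hef : e ∉ s ∨ f ∉ s)
    (h : ∀ c : ι → R, c ≠ 0 → (∀ i, c i ≠ 0 → i ∈ U) → ∑ i, c i • v i = 0 → 0 < c e * c f) :
    LinearIndepOn R v s := by
  refine linearIndepOn_iff_forall_fun.2 fun c hc hsum => by_contra fun hne => ?_
  have hpos := h c hne (fun i hi => hsU (hc i hi)) hsum
  rcases hef with he | hf
  · rw [not_not.1 (mt (hc e) he), zero_mul] at hpos
    exact lt_irrefl _ hpos
  · rw [not_not.1 (mt (hc f) hf), mul_zero] at hpos
    exact lt_irrefl _ hpos

theorem card_add_finrank_le_of_mulVec_eq_zero {m κ K V : Type*} [Fintype m] [Fintype κ] [Field K]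
    [AddCommGroup V] [Module K V] {A : Matrix m κ K} (hA : LinearIndependent K A.row)
    {M : V →ₗ[K] κ → K} (hM : Function.Injective M) (hAM : ∀ x, A.mulVec (M x) = 0) :
    Fintype.card m + Module.finrank K V ≤ Fintype.card κ := by
  have hle : LinearMap.range M ≤ LinearMap.ker A.mulVecLin := by
    rintro _ ⟨x, rfl⟩
    exact hAM x
  calc Fintype.card m + Module.finrank K V
      = Module.finrank K (LinearMap.range A.mulVecLin) + Module.finrank K (LinearMap.range M) := by
        rw [← hA.rank_matrix, LinearMap.finrank_range_of_inj hM, Matrix.rank]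
    _ ≤ Module.finrank K (LinearMap.range A.mulVecLin) +
          Module.finrank K (LinearMap.ker A.mulVecLin) := by
        gcongr
        exact Submodule.finrank_mono hle
    _ = Fintype.card κ := by
        rw [LinearMap.finrank_range_add_finrank_ker, Module.finrank_fintype_fun_eq_card]

/-- The strictly upper triangular matrix with the given entries. -/
def upper {n : ℕ} : (Pair n → ℝ) →ₗ[ℝ] Matrix (Fin n) (Fin n) ℝ where
  toFun c := .of fun i j => if h : i < j then c ⟨(i, j), h⟩ else 0
  map_add' c c' := by
    ext i j
    by_cases h : i < j <;> simp [h]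
  map_smul' r c := by
    ext i j
    by_cases h : i < j <;> simp [h]

section Upper

variable {n : ℕ} (c : Pair n → ℝ)

theorem upper_of_lt {i j : Fin n} (h : i < j) : upper c i j = c ⟨(i, j), h⟩ := dif_pos h

theorem upper_of_not_lt {i j : Fin n} (h : ¬i < j) : upper c i j = 0 := dif_neg h

theorem sum_mul_eq_sum_upper_mul (F : Fin n → Fin n → ℝ) :
    ∑ g : Pair n, c g * F g.1.1 g.1.2 = ∑ i, ∑ j, upper c i j * F i j := by
  rw [← Fintype.sum_prod_type' fun i j => upper c i j * F i j,
    ← Fintype.sum_subtype_add_sum_subtype fun p : Fin n × Fin n => p.1 < p.2]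
  rw [Fintype.sum_eq_zero (fun p : {p : Fin n × Fin n // ¬p.1 < p.2} => _) fun p => by
    rw [upper_of_not_lt c p.2, zero_mul], add_zero]
  exact Finset.sum_congr rfl fun g _ => by rw [upper_of_lt c g.2]

theorem dotProduct_upper_sub_transpose_mulVec (x : Fin n → ℝ) :
    x ⬝ᵥ (upper c - (upper c).transpose).mulVec x = 0 := by
  rw [Matrix.sub_mulVec, dotProduct_sub, Matrix.mulVec_transpose,
    dotProduct_comm x (Matrix.vecMul _ _), ← Matrix.dotProduct_mulVec, sub_self]

theorem upper_sub_transpose_injective :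
    Function.Injective fun c : Pair n → ℝ => upper c - (upper c).transpose := by
  intro c c' h
  ext g
  have := congrFun₂ h g.1.1 g.1.2
  simpa [upper_of_lt _ g.2, upper_of_not_lt _ g.2.not_gt] using this

end Upper

section TrivialMotions

variable {n d : ℕ}

theorem bjRow_apply (p : Fin n → Fin d → ℝ) (g : Pair n) (m : Fin n) (a : Fin d) :
    bjRow p g (m, a) = (if m = g.1.1 then p g.1.1 a - p g.1.2 a else 0) +
      (if m = g.1.2 then p g.1.2 a - p g.1.1 a else 0) := by
  have := g.2.ne
  grind [bjRow]

theorem bjRow_dotProduct (p : Fin n → Fin d → ℝ) (g : Pair n) (u : Fin n × Fin d → ℝ) :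
    bjRow p g ⬝ᵥ u = (p g.1.1 - p g.1.2) ⬝ᵥ fun a => u (g.1.1, a) - u (g.1.2, a) := by
  simp only [dotProduct, Fintype.sum_prod_type, bjRow_apply]
  rw [Finset.sum_comm]
  refine Finset.sum_congr rfl fun a _ => ?_
  simp only [add_mul, Finset.sum_add_distrib, ite_mul, zero_mul, Finset.sum_ite_eq',
    Finset.mem_univ, if_true, Pi.sub_apply]
  ring

/-- The trivial infinitesimal motions `p i ↦ c + K (p i)` of a framework `p`, where `c` is a vector
and `K` a skew-symmetric matrix, given by its entries above the diagonal. -/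
def trivialMotion (p : Fin n → Fin d → ℝ) :
    ((Fin d → ℝ) × (Pair d → ℝ)) →ₗ[ℝ] (Fin n × Fin d → ℝ) where
  toFun x ia := x.1 ia.2 + (upper x.2 - (upper x.2).transpose).mulVec (p ia.1) ia.2
  map_add' x y := by
    ext ia
    simp only [Prod.fst_add, Prod.snd_add, map_add, Matrix.transpose_add, add_sub_add_comm,
      Matrix.add_mulVec, Pi.add_apply]
    ring
  map_smul' r x := by
    ext ia
    simp only [Prod.smul_fst, Prod.smul_snd, map_smul, Matrix.transpose_smul, ← smul_sub,
      Matrix.smul_mulVec, Pi.smul_apply, smul_eq_mul, RingHom.id_apply]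
    ring

theorem bjRow_dotProduct_trivialMotion (p : Fin n → Fin d → ℝ) (g : Pair n)
    (x : (Fin d → ℝ) × (Pair d → ℝ)) : bjRow p g ⬝ᵥ trivialMotion p x = 0 := by
  rw [bjRow_dotProduct, ← dotProduct_upper_sub_transpose_mulVec x.2 (p g.1.1 - p g.1.2)]
  congr 1
  ext a
  rw [Matrix.mulVec_sub]
  exact add_sub_add_left_eq_sub _ _ _

/-- The framework on the moment curve `(s, s ^ 2, …, s ^ d)` at the parameters `t`. -/
def momentCurve (d : ℕ) (t : Fin n → ℝ) (i : Fin n) (b : Fin d) : ℝ := t i ^ ((b : ℕ) + 1)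

theorem trivialMotion_momentCurve_injective (hd : d < n) {t : Fin n → ℝ}
    (ht : Function.Injective t) : Function.Injective (trivialMotion (momentCurve d t)) := by
  rw [injective_iff_map_eq_zero]
  intro x hx
  have hcoeff : ∀ a, Fin.cons (x.1 a) ((upper x.2 - (upper x.2).transpose) a) =
      (0 : Fin (d + 1) → ℝ) := fun a => by
    refine Matrix.eq_zero_of_forall_index_sum_pow_mul_eq_zero
      (ht.comp (Fin.castLE_injective (Nat.succ_le_of_lt hd))) fun k => ?_
    have hmotion := congrFun hx (Fin.castLE hd k, a)
    rw [Fin.sum_univ_succ]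
    simpa [trivialMotion, momentCurve, Matrix.mulVec, dotProduct, mul_comm] using hmotion
  refine Prod.ext (funext fun a => congrFun (hcoeff a) 0) (upper_sub_transpose_injective ?_)
  ext a b
  simpa using congrFun (hcoeff a) b.succ

theorem ncard_add_le_of_linearIndepOn_bjRow (hd : d < n) {t : Fin n → ℝ}
    (ht : Function.Injective t) {U : Set (Pair n)}
    (hU : LinearIndepOn ℝ (bjRow (momentCurve d t)) U) :
    U.ncard + (d + Fintype.card (Pair d)) ≤ n * d := by
  classical
  have hle := card_add_finrank_le_of_mulVec_eq_zero
    (A := Matrix.of fun g : U => bjRow (momentCurve d t) g) hU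
    (trivialMotion_momentCurve_injective hd ht)
    fun x => funext fun g => bjRow_dotProduct_trivialMotion _ g.1 x
  simpa [Set.ncard_eq_toFinset_card', Module.finrank_prod] using hle

end TrivialMotions

section Dependence

variable {n : ℕ} {lam : Pair n → ℝ} {t : ℕ → ℝ} {U T₁ T₂ : Set (Pair n)} {e f : Pair n}

theorem sum_smul_bjRow_apply {d : ℕ} (lam : Pair n → ℝ) (p : Fin n → Fin d → ℝ) (m : Fin n)
    (a : Fin d) :
    (∑ g, lam g • bjRow p g) (m, a) =
      ∑ j, (upper lam m j + upper lam j m) * (p m a - p j a) := by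
  simp only [Finset.sum_apply, Pi.smul_apply, smul_eq_mul, bjRow_apply]
  rw [sum_mul_eq_sum_upper_mul lam fun i j =>
    (if m = i then p i a - p j a else 0) + (if m = j then p j a - p i a else 0)]
  simp only [mul_add, add_mul, mul_ite, mul_zero, Finset.sum_add_distrib, Finset.sum_ite_eq,
    Finset.mem_univ, if_true]
  congr 1
  rw [Finset.sum_comm]
  simp only [Finset.sum_ite_eq, Finset.mem_univ, if_true]

/-- The weights `(t j - t i) * lam {i, j}`, which form a stress of the vectors `(1, t j)` when `lam`
is a dependence of the rows of the framework on the moment curve at `t`. -/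
def dependenceStress (t : ℕ → ℝ) (lam : Pair n → ℝ) (i j : ℕ) : ℝ :=
  if h : i < n ∧ j < n then
    (upper lam ⟨i, h.1⟩ ⟨j, h.2⟩ + upper lam ⟨j, h.2⟩ ⟨i, h.1⟩) * (t j - t i)
  else 0

theorem dependenceStress_coe (t : ℕ → ℝ) (lam : Pair n → ℝ) (i j : Fin n) :
    dependenceStress t lam i j = (upper lam i j + upper lam j i) * (t j - t i) :=
  dif_pos ⟨i.2, j.2⟩

theorem dependenceStress_of_not (t : ℕ → ℝ) (lam : Pair n → ℝ) {i j : ℕ} (h : ¬(i < n ∧ j < n)) :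
    dependenceStress t lam i j = 0 :=
  dif_neg h

theorem dependenceStress_pair (t : ℕ → ℝ) (lam : Pair n → ℝ) (g : Pair n) :
    dependenceStress t lam g.1.1 g.1.2 = lam g * (t g.1.2 - t g.1.1) := by
  rw [dependenceStress_coe, upper_of_lt lam g.2, upper_of_not_lt lam g.2.not_gt, add_zero]

theorem dependenceStress_swap (t : ℕ → ℝ) (lam : Pair n → ℝ) (i j : ℕ) :
    dependenceStress t lam i j = -dependenceStress t lam j i := by
  by_cases h : i < n ∧ j < n
  · lift i to Fin n using h.1
    lift j to Fin n using h.2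
    rw [dependenceStress_coe, dependenceStress_coe]
    ring
  · rw [dependenceStress_of_not t lam h, dependenceStress_of_not t lam (mt And.symm h), neg_zero]

theorem pairStress_dependenceStress (t : ℕ → ℝ) (lam : Pair n → ℝ) (g : Pair n) :
    pairStress (fun i => (1, t i)) (dependenceStress t lam) (g.1.1, g.1.2) =
      lam g * (t g.1.2 - t g.1.1) ^ 2 := by
  rw [pairStress, dependenceStress_pair, det2]
  ring

theorem dependenceStress_eq_zero_of_not_pairRel (hlam : ∀ g, lam g ≠ 0 → g ∈ U) (i j : ℕ)
    (h : ¬(i < n ∧ j < n ∧ pairRel U i j)) : dependenceStress t lam i j = 0 := by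
  by_contra hne
  have hlt : i < n ∧ j < n := not_not.1 (mt (dependenceStress_of_not t lam) hne)
  refine h ⟨hlt.1, hlt.2, ?_⟩
  clear h
  wlog hij : i < j generalizing i j
  · rw [dependenceStress_swap, neg_eq_zero] at hne
    refine pairRel_symm (this j i hne hlt.symm (lt_of_le_of_ne (not_lt.1 hij) ?_))
    rintro rfl
    exact hne (self_eq_neg.1 (dependenceStress_swap t lam j j))
  let g : Pair n := ⟨(⟨i, hlt.1⟩, ⟨j, hlt.2⟩), hij⟩
  refine pairRel_coe.2 (hlam g fun hg => hne ?_)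
  rw [← zero_mul (t j - t i), ← hg]
  exact dependenceStress_pair t lam g

/-- The row sums of a dependence at the powers `b` and `b + 1` combine to the power `b` of its
stress, as `(t j - t i) * t j ^ b = (t j ^ (b + 1) - t i ^ (b + 1)) - t i * (t j ^ b - t i ^ b)`. -/
theorem sum_dependenceStress_mul_pow {d : ℕ}
    (hsum : ∑ g, lam g • bjRow (momentCurve d fun i : Fin n => t i) g = 0) (i : Fin n) {b : ℕ}
    (hb : b < d) : ∑ j : Fin n, dependenceStress t lam i j * t j ^ b = 0 := by
  have hrow : ∀ B ≤ d, ∑ j : Fin n, (upper lam i j + upper lam j i) * (t i ^ B - t j ^ B) = 0 := by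
    rintro (_ | a) ha
    · simp
    · exact (sum_smul_bjRow_apply lam _ i ⟨a, ha⟩).symm.trans (congrFun hsum _)
  calc ∑ j : Fin n, dependenceStress t lam i j * t j ^ b
      = t i * ∑ j : Fin n, (upper lam i j + upper lam j i) * (t i ^ b - t j ^ b) -
          ∑ j : Fin n, (upper lam i j + upper lam j i) * (t i ^ (b + 1) - t j ^ (b + 1)) := by
        rw [Finset.mul_sum, ← Finset.sum_sub_distrib]
        refine Finset.sum_congr rfl fun j _ => ?_
        rw [dependenceStress_coe]
        ring
    _ = 0 := by rw [hrow b hb.le, hrow (b + 1) hb, mul_zero, sub_zero]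

theorem isStress_dependenceStress (hlam : ∀ g, lam g ≠ 0 → g ∈ U)
    (hsum : ∑ g, lam g • bjRow (momentCurve 4 fun i : Fin n => t i) g = 0) :
    IsStress n (pairRel U) (fun i => (1, t i)) (dependenceStress t lam) where
  antisymm := dependenceStress_swap t lam
  support := dependenceStress_eq_zero_of_not_pairRel hlam
  equilibrium i p₁ p₂ p₃ := by
    by_cases hi : i < n
    · lift i to Fin n using hi
      open Polynomial in
      let P : ℝ[X] := (C p₁.1 * X - C p₁.2) * (C p₂.1 * X - C p₂.2) * (C p₃.1 * X - C p₃.2)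
      have hP : P.natDegree < 4 := by
        have : P.natDegree ≤ 3 := by
          simp only [P]
          compute_degree
        omega
      have heval : ∀ s : ℝ, det2 p₁ (1, s) * det2 p₂ (1, s) * det2 p₃ (1, s) = P.eval s := by
        intro s
        simp [P, det2]
      rw [Finset.sum_range]
      simp only [heval, Polynomial.eval_eq_sum_range' hP, Finset.mul_sum,
        mul_left_comm _ (P.coeff _)]
      rw [Finset.sum_comm]
      refine Finset.sum_eq_zero fun b hb => ?_
      rw [← Finset.mul_sum, sum_dependenceStress_mul_pow hsum i (Finset.mem_range.1 hb), mul_zero]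
    · refine Finset.sum_eq_zero fun j _ => ?_
      rw [dependenceStress_of_not t lam fun h => hi h.1, zero_mul]

theorem pairRel_union : pairRel (T₁ ∪ T₂) = pairRel T₁ ⊔ pairRel T₂ := by
  ext i j
  simp only [pairRel, Set.mem_union, or_and_right, exists_or]
  rfl

theorem PositiveStresses.mul_pos
    (h : PositiveStresses n (pairRel T₁ ⊔ pairRel T₂) (e.1.1, e.1.2) (f.1.1, f.1.2)
      fun i => (1, t i)) (ht : StrictMonoOn t (Set.Iio n)) (hne : lam ≠ 0)
    (hlam : ∀ g, lam g ≠ 0 → g ∈ T₁ ∪ T₂)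
    (hsum : ∑ g, lam g • bjRow (momentCurve 4 fun i : Fin n => t i) g = 0) :
    0 < lam e * lam f := by
  have hlt : ∀ g : Pair n, 0 < t g.1.2 - t g.1.1 := fun g =>
    sub_pos.2 (ht g.1.1.2 g.1.2.2 g.2)
  obtain ⟨g, hg⟩ := Function.ne_iff.1 hne
  have hw : dependenceStress t lam ≠ 0 := fun h0 => by
    have := congrFun₂ h0 g.1.1 g.1.2
    rw [dependenceStress_pair] at this
    exact mul_ne_zero hg (hlt g).ne' this
  have hpos := h _ (pairRel_union ▸ isStress_dependenceStress hlam hsum) hw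
  rw [pairStress_dependenceStress, pairStress_dependenceStress, mul_mul_mul_comm] at hpos
  exact pos_of_mul_pos_left hpos (by positivity)

theorem exists_dependence_of_lt {t : Fin n → ℝ} (hn : 4 < n) (ht : Function.Injective t)
    (hU : 4 * n < U.ncard + 10) :
    ∃ lam : Pair n → ℝ, lam ≠ 0 ∧ (∀ g, lam g ≠ 0 → g ∈ U) ∧
      ∑ g, lam g • bjRow (momentCurve 4 t) g = 0 := by
  by_contra! hno
  have hle := ncard_add_le_of_linearIndepOn_bjRow hn ht
    (linearIndepOn_iff_forall_fun.2 fun c hc hsum => by_contra fun hne => hno c hne hc hsum)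
  rw [show Fintype.card (Pair 4) = 6 from rfl] at hle
  omega

end Dependence

end Ngon

/-- For any flip between two 2-triangulations `T₁`, `T₂` of the `n`-gon there
are positions `t₁ < … < tₙ` along the moment curve in `ℝ⁴` such that both triangulations index
independent rows of `R(p)` and the unique (up to scalar) dependence `λ` supported on `T₁ ∪ T₂`
satisfies `λ_e · λ_f > 0` for the two flipped edges. -/
theorem stmt19 (n : ℕ) (hn : 5 ≤ n) (T₁ T₂ : Set (Pair n))
    (h₁ : IsTriangulation n 2 T₁) (h₂ : IsTriangulation n 2 T₂)
    (e f : Pair n) (he : T₁ \ T₂ = {e}) (hf : T₂ \ T₁ = {f}) :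
    ∃ t : Fin n → ℝ, StrictMono t ∧
      LinearIndependent ℝ
        (fun a : T₁ => bjRow (fun i (b : Fin 4) => t i ^ ((b : ℕ) + 1)) a.val) ∧
      LinearIndependent ℝ
        (fun a : T₂ => bjRow (fun i (b : Fin 4) => t i ^ ((b : ℕ) + 1)) a.val) ∧
      (∃ lam : Pair n → ℝ, lam ≠ 0 ∧ (∀ g, lam g ≠ 0 → g ∈ T₁ ∪ T₂) ∧
        ∑ g : Pair n, lam g • bjRow (fun i (b : Fin 4) => t i ^ ((b : ℕ) + 1)) g = 0) ∧
      ∀ lam : Pair n → ℝ, lam ≠ 0 → (∀ g, lam g ≠ 0 → g ∈ T₁ ∪ T₂) →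
        (∑ g : Pair n, lam g • bjRow (fun i (b : Fin 4) => t i ^ ((b : ℕ) + 1)) g = 0) →
        0 < lam e * lam f := by
  have hflip := Ngon.isFlip_pairRel h₁ h₂ he hf
  have he_mem : e ∈ T₁ \ T₂ := he ▸ rfl
  have hf_mem : f ∈ T₂ \ T₁ := hf ▸ rfl
  have hlong : ¬(e.1.2.1 ≤ e.1.1.1 + 2 ∨ e.1.1.1 + n ≤ e.1.2.1 + 2) := fun hshort =>
    he_mem.2 (Ngon.pairRel_coe.1 (hflip.right.mem_of_short e.2 e.1.2.2 hshort))
  have hsix : 6 ≤ n := by omega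
  obtain ⟨t, ht, hpos⟩ := (hflip.isRealizable hsix).exists_strictMonoOn (by omega)
    ⟨e.1.1.2, e.1.2.2⟩ ⟨f.1.1.2, f.1.2.2⟩
  have hmono : StrictMono fun i : Fin n => t i := fun i j hij => ht i.2 j.2 hij
  have hdep := fun lam => hpos.mul_pos (lam := lam) ht
  exact ⟨fun i => t i, hmono,
    Ngon.linearIndepOn_of_mul_pos Set.subset_union_left (.inr hf_mem.2) hdep,
    Ngon.linearIndepOn_of_mul_pos Set.subset_union_right (.inl he_mem.2) hdep,
    Ngon.exists_dependence_of_lt hn hmono.injective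
      (Ngon.four_mul_lt_ncard_union_add_ten hn h₁ hf_mem), hdep⟩
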